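/- arXiv:1205.5165 — 4 statements merged into one kernel-verified Lean document; each statement's English description precedes it below -/
import Mathlib

section
/- Let Ω ⊆ ℂ be a domain whose complement ℂ ∖ Ω is nonempty and compact, admitting a classical roof function u. Let r be a complex-valued function holomorphic on an open set containing the closure of Ω and satisfying r(z) → 0 as |z| → ∞. Then ∫_{∂Ω} r dℋ¹ = 0, where ℋ¹ denotes one-dimensional Hausdorff measure (arclength measure) on ∂Ω; in particular ∂Ω has finite ℋ¹ measure and the integral is absolutely convergent. -/
/-!
Let `p = ∂u/∂x - i ∂u/∂y = 2 ∂u/∂z`, which is holomorphic on `Ω` because `u` is harmonic. On `∂Ω` the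
inner unit normal is `∇u`, so `p dz = ± i |∇u| ds = ± i ds` there, with a sign depending on the
orientation, and `∫_{∂Ω} r ds` is a constant multiple of the contour integral of `r p` over `∂Ω`;
it vanishes once `r p = o(1 / |z|)` at infinity. The proof makes both halves of this rigorous
without parametrizing the boundary or using Stokes' theorem on `Ω`.

*The boundary.* Let `η` be a `C¹` cutoff rising from `0` to `1` on `[h, 2h]`, with derivative `k`.
The layer integrals `∫_Ω g k(u) |∇u|²` converge to `∫_{∂Ω} g dℋ¹` as `h → 0`, for every continuous
compactly supported `g` (`C1Roof.layer_tendsto`). Locally, after a rotation making `∇u` `ε`-close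
to the direction `1`, `Ω` lies to the right of the graph of a Lipschitz function of the imaginary
part with constant `O(ε)` (`NearRe.exists_graph`); this compares `ℋ¹` on `∂Ω` with Lebesgue measure on the
tangential axis, and the integral of `k(u) ∂u/∂x` along each horizontal line is exactly `1`. A
partition of unity, with `∂Ω` compact, globalizes the estimate and shows that `ℋ¹(∂Ω) < ∞`.

*Integration by parts.* Let `χ` be a cutoff equal to `1` on a large disc of radius `R`.
Since `r p` is holomorphic, applying `∂/∂x + i ∂/∂y` to the compactly supported `C¹` function
`χ η(u) r p` and integrating leaves two terms: the layer integral of `χ r`, because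
`p · (∂u/∂x + i ∂u/∂y) = |∇u|²`, and the integral of `η(u) r p (∂χ/∂x + i ∂χ/∂y)`
(`C1Roof.integral_layer_eq`).

*Infinity.* A positive harmonic function on an exterior planar domain satisfies `p = O(1 / |z|)`
(`HarmonicExterior.exists_decay`): Borel–Carathéodory estimates on discs give polynomial growth, so
`p` has at most a pole at infinity, and a leading term `c z ^ m` with `m ≥ 0` would force `u` to
become negative along some ray. Hence the term with the derivatives of `χ` is at most a constant
multiple of the supremum of `|r|` outside the disc of radius `R`, which tends to `0`.
-/

open Metric Set

/-- The Laplacian of a real-valued function on `ℂ ≅ ℝ²`, as the sum of the second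
directional derivatives in the directions `1` and `i`. -/
noncomputable def lapC (u : ℂ → ℝ) (z : ℂ) : ℝ :=
  fderiv ℝ (fun w => fderiv ℝ u w 1) z 1 +
    fderiv ℝ (fun w => fderiv ℝ u w Complex.I) z Complex.I

/-- `u` is harmonic on `s ⊆ ℂ`: twice continuously differentiable with vanishing
Laplacian. -/
def HarmonicOnC (u : ℂ → ℝ) (s : Set ℂ) : Prop :=
  (∀ z ∈ s, ContDiffAt ℝ 2 u z) ∧ ∀ z ∈ s, lapC u z = 0

/-- `u` is a classical roof function for `Ω ⊆ ℂ`: continuous on the closure, harmonic and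
positive in `Ω`, vanishing on `∂Ω`, continuously differentiable up to the boundary
(witnessed by a continuous extension `G` of the differential) with `‖∇u‖ = 1` on `∂Ω`. -/
def IsRoofFunctionC (Ω : Set ℂ) (u : ℂ → ℝ) : Prop :=
  ContinuousOn u (closure Ω) ∧
  HarmonicOnC u Ω ∧
  (∀ z ∈ Ω, 0 < u z) ∧
  (∀ z ∈ frontier Ω, u z = 0) ∧
  ∃ G : ℂ → (ℂ →L[ℝ] ℝ),
    ContinuousOn G (closure Ω) ∧ (∀ z ∈ Ω, G z = fderiv ℝ u z) ∧
    ∀ z ∈ frontier Ω, ‖G z‖ = 1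

open MeasureTheory

section

open Filter Topology

/-! ### Domains close to a half-plane: the boundary as a graph -/

/-- A function `u` on an open set `Ω`, positive inside, zero on the boundary and continuous up to
the boundary, whose differential on `Ω` is the restriction of a map `G` continuous on the
closure. -/
structure C1Roof (Ω : Set ℂ) (u : ℂ → ℝ) (G : ℂ → (ℂ →L[ℝ] ℝ)) : Prop where
  isOpen : IsOpen Ω
  cont : ContinuousOn u (closure Ω)
  contG : ContinuousOn G (closure Ω)
  hasFDeriv : ∀ z ∈ Ω, HasFDerivAt u (G z) z
  pos : ∀ z ∈ Ω, 0 < u z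
  zero : ∀ z ∈ frontier Ω, u z = 0

/-- A `C1Roof` whose differential `G` is within `ε` of `Re` on the part of `closure Ω` in the disc
of radius `ρ` about the origin. This is the shape of a roof function near a boundary point, after
the inner normal there has been rotated to the direction `1`. -/
structure NearRe (Ω : Set ℂ) (u : ℂ → ℝ) (G : ℂ → (ℂ →L[ℝ] ℝ)) (ρ ε : ℝ) : Prop
    extends C1Roof Ω u G where
  near : ∀ z ∈ closure Ω, ‖z‖ < ρ → ‖G z - Complex.reCLM‖ ≤ ε

namespace NearRe

variable {Ω : Set ℂ} {u : ℂ → ℝ} {G : ℂ → (ℂ →L[ℝ] ℝ)} {ρ ε : ℝ}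

lemma apply_near (H : NearRe Ω u G ρ ε) {z : ℂ} (hz : z ∈ closure Ω) (hzρ : ‖z‖ < ρ) (v : ℂ) :
    |G z v - v.re| ≤ ε * ‖v‖ := by
  have h := (G z - Complex.reCLM).le_opNorm v
  have h2 := mul_le_mul_of_nonneg_right (H.near z hz hzρ) (norm_nonneg v)
  simpa using h.trans h2

/-- While a segment in the cone `ε‖v‖ ≤ Re v` stays in `Ω`, `u` grows along it at rate at least
`Re v - ε‖v‖`. -/
lemma grow_of_mem (H : NearRe Ω u G ρ ε) {z v : ℂ} {T : ℝ} (hT : 0 ≤ T)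
    (hz : z ∈ Ω)
    (hball : ∀ t ∈ Icc 0 T, ‖z + (t : ℂ) * v‖ < ρ)
    (hin : ∀ t ∈ Ico 0 T, z + (t : ℂ) * v ∈ Ω) :
    u z + T * (v.re - ε * ‖v‖) ≤ u (z + (T : ℂ) * v) := by
  have hcl : ∀ t ∈ Icc 0 T, z + (t : ℂ) * v ∈ closure Ω := by
    intro t ht
    rcases hT.eq_or_lt with h0 | h0
    · have : t = 0 := le_antisymm (h0 ▸ ht.2) ht.1
      subst this
      simpa using subset_closure hz
    · have hcont : Continuous fun t : ℝ => z + (t : ℂ) * v := by fun_prop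
      have : t ∈ closure (Ico 0 T) := by rwa [closure_Ico h0.ne]
      exact map_mem_closure (f := fun t : ℝ => z + (t : ℂ) * v) hcont this hin
  have hc : ContinuousOn (fun t : ℝ => u (z + (t : ℂ) * v)) (Icc 0 T) :=
    H.cont.comp (by fun_prop) hcl
  have hder : ∀ t ∈ Ioo 0 T, HasDerivAt (fun t : ℝ => u (z + (t : ℂ) * v))
      (G (z + (t : ℂ) * v) v) t := by
    intro t ht
    have h1 : HasDerivAt (fun t : ℝ => z + (t : ℂ) * v) v t := by
      simpa using ((Complex.ofRealCLM.hasDerivAt (x := t)).mul_const v).const_add z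
    exact (H.hasFDeriv _ (hin t ⟨ht.1.le, ht.2⟩)).comp_hasDerivAt t h1
  have key := Convex.mul_sub_le_image_sub_of_le_deriv (convex_Icc 0 T) hc
    (fun t ht => (hder t (by rwa [interior_Icc] at ht)).differentiableAt.differentiableWithinAt)
    (C := v.re - ε * ‖v‖) (fun t ht => by
      rw [interior_Icc] at ht
      rw [(hder t ht).deriv]
      have := H.apply_near (subset_closure (hin t ⟨ht.1.le, ht.2⟩)) (hball t ⟨ht.1.le, ht.2.le⟩) v
      linarith [(abs_le.1 this).1])
    0 (left_mem_Icc.2 hT) T (right_mem_Icc.2 hT) hT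
  simp at key
  linarith

/-- The cone property: moving from a point of `Ω` in a direction of the cone `ε‖v‖ ≤ Re v` cannot
leave `Ω`, since `u` does not decrease and so cannot reach its boundary value `0`. -/
lemma cone (H : NearRe Ω u G ρ ε) {z v : ℂ} (hz : z ∈ Ω) (hzρ : ‖z‖ < ρ)
    (hvρ : ‖z + v‖ < ρ) (hv : ε * ‖v‖ ≤ v.re) :
    z + v ∈ Ω ∧ u z + (v.re - ε * ‖v‖) ≤ u (z + v) := by
  have hball : ∀ t ∈ Icc (0 : ℝ) 1, ‖z + (t : ℂ) * v‖ < ρ := by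
    intro t ht
    have hcv := convex_ball (0 : ℂ) ρ
    have := hcv (x := z) (by simpa using hzρ) (y := z + v) (by simpa using hvρ)
      (a := 1 - t) (b := t) (by linarith [ht.2]) ht.1 (by ring)
    have e : (1 - t) • z + t • (z + v) = z + (t : ℂ) * v := by
      simp only [Complex.real_smul]; push_cast; ring
    rw [e] at this
    simpa using this
  have hcont : Continuous fun t : ℝ => z + (t : ℂ) * v := by fun_prop
  have hall : ∀ t ∈ Icc (0 : ℝ) 1, z + (t : ℂ) * v ∈ Ω := by
    by_contra! hcon
    obtain ⟨t₀, ht₀, ht₀n⟩ := hcon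
    -- the first exit time
    set S := Icc (0 : ℝ) 1 ∩ (fun t : ℝ => z + (t : ℂ) * v) ⁻¹' Ωᶜ with hS
    have hScl : IsClosed S := isClosed_Icc.inter (H.isOpen.isClosed_compl.preimage hcont)
    have hSne : S.Nonempty := ⟨t₀, ht₀, ht₀n⟩
    have hbdd : BddBelow S := ⟨0, fun t ht => ht.1.1⟩
    have hm := hScl.csInf_mem hSne hbdd
    set T := sInf S
    have hin : ∀ t ∈ Ico 0 T, z + (t : ℂ) * v ∈ Ω := by
      intro t ht
      by_contra hn
      exact absurd (csInf_le hbdd ⟨⟨ht.1, ht.2.le.trans hm.1.2⟩, hn⟩) (not_le.2 ht.2)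
    have hT : 0 < T := by
      rcases hm.1.1.eq_or_lt with h0 | h0
      · exfalso
        apply hm.2
        rw [← h0]; simpa using hz
      · exact h0
    have hg := H.grow_of_mem hm.1.1 hz (fun t ht => hball t ⟨ht.1, ht.2.trans hm.1.2⟩) hin
    have hfr : z + (T : ℂ) * v ∈ frontier Ω := by
      rw [H.isOpen.frontier_eq]
      refine ⟨?_, hm.2⟩
      have : T ∈ closure (Ico 0 T) := by
        rw [closure_Ico hT.ne]; exact right_mem_Icc.2 hT.le
      exact map_mem_closure (f := fun t : ℝ => z + (t : ℂ) * v) hcont this hin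
    rw [H.zero _ hfr] at hg
    have := H.pos z hz
    nlinarith [mul_nonneg hT.le (sub_nonneg.2 hv)]
  have h1 := hall 1 (by simp)
  have hg := H.grow_of_mem zero_le_one hz hball (fun t ht => hall t ⟨ht.1, ht.2.le⟩)
  simp only [Complex.ofReal_one, one_mul] at h1 hg
  exact ⟨h1, hg⟩

/-- The cone property at closure points. -/
lemma cone_closure (H : NearRe Ω u G ρ ε) {p q : ℂ} (hp : p ∈ closure Ω)
    (hpρ : ‖p‖ < ρ) (hqρ : ‖q‖ < ρ) (hv : ε * ‖q - p‖ < (q - p).re) : q ∈ Ω := by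
  have hopen : IsOpen {z : ℂ | ‖z‖ < ρ ∧ ε * ‖q - z‖ < (q - z).re} :=
    (isOpen_lt (f := fun z : ℂ => ‖z‖) (g := fun _ => ρ) (by fun_prop) (by fun_prop)).inter
      (isOpen_lt (f := fun z : ℂ => ε * ‖q - z‖) (g := fun z : ℂ => (q - z).re)
        (by fun_prop) (by simp only [Complex.sub_re]; fun_prop))
  obtain ⟨z, hz, hzΩ⟩ := mem_closure_iff.1 hp _ hopen ⟨hpρ, hv⟩
  have := (H.cone hzΩ hz.1 (v := q - z) (by simpa using hqρ) hz.2.le).1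
  simpa using this

lemma not_mem_of_frontier (H : NearRe Ω u G ρ ε) {p : ℂ} (hp : p ∈ frontier Ω) : p ∉ Ω := by
  rw [H.isOpen.frontier_eq] at hp
  exact hp.2

/-- Two boundary points are separated mostly in the tangential direction. -/
lemma abs_re_le (H : NearRe Ω u G ρ ε) {p q : ℂ} (hp : p ∈ frontier Ω)
    (hq : q ∈ frontier Ω) (hpρ : ‖p‖ < ρ) (hqρ : ‖q‖ < ρ) : |(q - p).re| ≤ ε * ‖q - p‖ := by
  rw [abs_le]
  constructor
  · by_contra! h
    refine H.not_mem_of_frontier hp (H.cone_closure (frontier_subset_closure hq) hqρ hpρ ?_)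
    rw [norm_sub_rev]
    simp only [Complex.sub_re] at h ⊢
    linarith
  · by_contra! h
    exact H.not_mem_of_frontier hq (H.cone_closure (frontier_subset_closure hp) hpρ hqρ h)

lemma norm_sub_le (H : NearRe Ω u G ρ ε) (hε : 0 < ε) (hε2 : ε ≤ 1 / 2) {p q : ℂ}
    (hp : p ∈ frontier Ω)
    (hq : q ∈ frontier Ω) (hpρ : ‖p‖ < ρ) (hqρ : ‖q‖ < ρ) :
    ‖q - p‖ ≤ (1 + 2 * ε) * |(q - p).im| := by
  have h1 := H.abs_re_le hp hq hpρ hqρ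
  have h2 := Complex.norm_le_abs_re_add_abs_im (q - p)
  have h3 := abs_nonneg (q - p).im
  have h4 : (1 - ε) * ‖q - p‖ ≤ |(q - p).im| := by linarith
  -- `1 ≤ (1 + 2ε)(1 - ε)` because `ε ≤ 1/2`
  have h5 : 1 ≤ (1 + 2 * ε) * (1 - ε) := by nlinarith
  calc ‖q - p‖ ≤ ((1 + 2 * ε) * (1 - ε)) * ‖q - p‖ :=
        le_mul_of_one_le_left (norm_nonneg _) h5
    _ = (1 + 2 * ε) * ((1 - ε) * ‖q - p‖) := by ring
    _ ≤ _ := by gcongr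

/-- Near the origin `Ω` is the region to the right of the graph of a function `φ` of the
imaginary part. -/
lemma exists_graph {a : ℝ} (H : NearRe Ω u G (2 * a) ε) (hε : 0 < ε)
    (hε2 : ε ≤ 1 / 2) (ha : 0 < a) (h0 : (0 : ℂ) ∈ frontier Ω) :
    ∃ φ : ℝ → ℝ, ∀ y, |y| < a → |φ y| < a ∧ (⟨φ y, y⟩ : ℂ) ∈ frontier Ω ∧
      ∀ x, |x| ≤ a → ((⟨x, y⟩ : ℂ) ∈ Ω ↔ φ y < x) := by
  have hnorm : ∀ x y : ℝ, |x| ≤ a → |y| < a → ‖(⟨x, y⟩ : ℂ)‖ < 2 * a := by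
    intro x y hx hy
    have := Complex.norm_le_abs_re_add_abs_im (⟨x, y⟩ : ℂ)
    simp only at this
    linarith
  have hnorm2 : ∀ x y : ℝ, |x| = a → |y| < a → ε * ‖(⟨x, y⟩ : ℂ)‖ < a := by
    intro x y hx hy
    have := hnorm x y hx.le hy
    nlinarith [norm_nonneg (⟨x, y⟩ : ℂ)]
  have h0n : ‖(0 : ℂ)‖ < 2 * a := by simpa using ha
  have key : ∀ y : ℝ, ∃ f : ℝ, |y| < a → |f| < a ∧ (⟨f, y⟩ : ℂ) ∈ frontier Ω ∧
      ∀ x, |x| ≤ a → ((⟨x, y⟩ : ℂ) ∈ Ω ↔ f < x) := by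
    intro y
    by_cases hy : |y| < a
    swap
    · exact ⟨0, fun h => absurd h hy⟩
    have hR : (⟨a, y⟩ : ℂ) ∈ Ω := by
      refine H.cone_closure (frontier_subset_closure h0) h0n
        (hnorm a y (abs_of_pos ha).le hy) ?_
      simpa using hnorm2 a y (abs_of_pos ha) hy
    have hLn : (⟨-a, y⟩ : ℂ) ∉ closure Ω := by
      intro hcl
      refine H.not_mem_of_frontier h0 (H.cone_closure hcl
        (hnorm (-a) y (by rw [abs_neg, abs_of_pos ha]) hy) h0n ?_)
      have := hnorm2 (-a) y (by rw [abs_neg, abs_of_pos ha]) hy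
      simpa using this
    have hcont : Continuous fun x : ℝ => (⟨x, y⟩ : ℂ) := by
      have : (fun x : ℝ => (⟨x, y⟩ : ℂ)) = fun x : ℝ => (x : ℂ) + y * Complex.I := by
        ext x; apply Complex.ext <;> simp
      rw [this]; fun_prop
    have hup : ∀ x x' : ℝ, |x| ≤ a → |x'| ≤ a → x ≤ x' → (⟨x, y⟩ : ℂ) ∈ Ω →
        (⟨x', y⟩ : ℂ) ∈ Ω := by
      intro x x' hx hx' hxx hm
      have e : (⟨x, y⟩ : ℂ) + ((x' - x : ℝ) : ℂ) = ⟨x', y⟩ := by apply Complex.ext <;> simp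
      have := (H.cone hm (hnorm x y hx hy) (v := ((x' - x : ℝ) : ℂ))
        (by rw [e]; exact hnorm x' y hx' hy) (by
          rw [Complex.norm_real, Complex.ofReal_re, Real.norm_eq_abs,
            abs_of_nonneg (sub_nonneg.2 hxx)]
          nlinarith)).1
      rwa [e] at this
    set S := Icc (-a) a ∩ (fun x : ℝ => (⟨x, y⟩ : ℂ)) ⁻¹' Ωᶜ with hS
    have hScl : IsClosed S := isClosed_Icc.inter (H.isOpen.isClosed_compl.preimage hcont)
    have hLS : -a ∈ S := ⟨⟨le_rfl, by linarith⟩, fun h => hLn (subset_closure h)⟩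
    have hbdd : BddAbove S := ⟨a, fun t ht => ht.1.2⟩
    have hm := hScl.csSup_mem ⟨_, hLS⟩ hbdd
    set f := sSup S with hf
    have hfa : f < a := by
      rcases hm.1.2.eq_or_lt with h | h
      · exact absurd (h ▸ hR) hm.2
      · exact h
    have hiff : ∀ x, |x| ≤ a → ((⟨x, y⟩ : ℂ) ∈ Ω ↔ f < x) := by
      intro x hx
      constructor
      · intro hxm
        by_contra! hle
        exact hm.2 (hup x f hx (abs_le.2 hm.1) hle hxm)
      · intro hlt
        by_contra hn
        exact absurd (le_csSup hbdd ⟨abs_le.1 hx, hn⟩) (not_le.2 hlt)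
    have hcl : (⟨f, y⟩ : ℂ) ∈ closure Ω := by
      have : f ∈ closure (Ioo f a) := by
        rw [closure_Ioo hfa.ne]; exact left_mem_Icc.2 hfa.le
      refine map_mem_closure (f := fun x : ℝ => (⟨x, y⟩ : ℂ)) hcont this fun x hx => ?_
      exact (hiff x (abs_le.2 ⟨hm.1.1.trans hx.1.le, hx.2.le⟩)).2 hx.1
    have hfL : -a < f := by
      rcases hm.1.1.eq_or_lt with h | h
      · exact absurd (h ▸ hcl) hLn
      · exact h
    refine ⟨f, fun _ => ⟨abs_lt.2 ⟨hfL, hfa⟩, ?_, hiff⟩⟩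
    rw [H.isOpen.frontier_eq]
    exact ⟨hcl, hm.2⟩
  choose φ hφ using key
  exact ⟨φ, hφ⟩

end NearRe

/-! ### Cutoffs and layer integrals -/

/-- A `C¹` nondecreasing cutoff `η` at scale `h`, with derivative `k`: it rises from `0` to `1` as
its argument runs through `[h, 2h]`. -/
structure Cut (h : ℝ) (η k : ℝ → ℝ) : Prop where
  hasDeriv : ∀ t, HasDerivAt η (k t) t
  contDeriv : Continuous k
  nonneg : ∀ t, 0 ≤ k t
  eq_zero : ∀ t ≤ h, η t = 0
  eq_one : ∀ t, 2 * h ≤ t → η t = 1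
  deriv_low : ∀ t ≤ h, k t = 0
  deriv_high : ∀ t, 2 * h ≤ t → k t = 0
  mem : ∀ t, η t ∈ Icc (0 : ℝ) 1

lemma exists_cut {h : ℝ} (hh : 0 < h) : ∃ η k : ℝ → ℝ, Cut h η k := by
  have hc : ContDiff ℝ 1 fun t : ℝ => Real.smoothTransition (t / h - 1) :=
    (Real.smoothTransition.contDiff (n := 1)).comp (by fun_prop)
  have hm : Monotone fun t : ℝ => Real.smoothTransition (t / h - 1) := by
    intro s t hst
    apply Real.smoothTransition.monotone
    gcongr
  have h0 : ∀ t ≤ h, Real.smoothTransition (t / h - 1) = 0 := fun t ht =>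
    Real.smoothTransition.zero_of_nonpos (by rw [sub_nonpos, div_le_one hh]; exact ht)
  have h1 : ∀ t, 2 * h ≤ t → Real.smoothTransition (t / h - 1) = 1 := fun t ht =>
    Real.smoothTransition.one_of_one_le (by
      have : 2 ≤ t / h := by rwa [le_div_iff₀ hh]
      linarith)
  refine ⟨_, _, ?_, hc.continuous_deriv le_rfl, fun t => hm.deriv_nonneg, h0, h1, ?_, ?_, ?_⟩
  · intro t
    exact (hc.differentiable one_ne_zero t).hasDerivAt
  -- the extreme values `0` and `1` are attained there, so the derivative vanishes
  · intro t ht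
    apply IsLocalMin.deriv_eq_zero
    filter_upwards with s
    simp only [h0 t ht]
    exact Real.smoothTransition.nonneg _
  · intro t ht
    apply IsLocalMax.deriv_eq_zero
    filter_upwards with s
    simp only [h1 t ht]
    exact Real.smoothTransition.le_one _
  · exact fun t => ⟨Real.smoothTransition.nonneg _, Real.smoothTransition.le_one _⟩

lemma continuous_indicator_of_eventually_zero {E : Type*} [TopologicalSpace E] [Zero E]
    {Ω : Set ℂ} (hΩ : IsOpen Ω) {Q : ℂ → E} (hQ : ContinuousOn Q Ω)
    (h0 : ∀ z ∉ Ω, ∀ᶠ w in 𝓝 z, w ∈ Ω → Q w = 0) : Continuous (Ω.indicator Q) := by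
  rw [continuous_iff_continuousAt]
  intro z
  by_cases hz : z ∈ Ω
  · refine (hQ.continuousAt (hΩ.mem_nhds hz)).congr ?_
    filter_upwards [hΩ.mem_nhds hz] with w hw
    rw [indicator_of_mem hw]
  · refine (continuousAt_const (y := (0 : E))).congr ?_
    filter_upwards [h0 z hz] with w hw
    by_cases hwΩ : w ∈ Ω
    · rw [indicator_of_mem hwΩ, hw hwΩ]
    · rw [indicator_of_notMem hwΩ]

namespace C1Roof

variable {Ω : Set ℂ} {u : ℂ → ℝ} {G : ℂ → (ℂ →L[ℝ] ℝ)}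

lemma eventually_lt (H : C1Roof Ω u G) {h : ℝ} (hh : 0 < h) {z : ℂ} (hz : z ∉ Ω) :
    ∀ᶠ w in 𝓝 z, w ∈ Ω → u w < h := by
  by_cases hcl : z ∈ closure Ω
  · have hfr : z ∈ frontier Ω := by rw [H.isOpen.frontier_eq]; exact ⟨hcl, hz⟩
    have := (H.cont z hcl).eventually_lt_const (u := h) (by rw [H.zero z hfr]; exact hh)
    filter_upwards [eventually_nhdsWithin_iff.1 this] with w hw hwΩ
    exact hw (subset_closure hwΩ)
  · filter_upwards [isClosed_closure.isOpen_compl.mem_nhds hcl] with w hw hwΩ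
    exact absurd (subset_closure hwΩ) hw

/-- The layer density `k(u)|∇u|²`, weighted by `g`, extended by zero outside `Ω`. -/
noncomputable def layer (Ω : Set ℂ) (u : ℂ → ℝ) (G : ℂ → (ℂ →L[ℝ] ℝ)) (k : ℝ → ℝ)
    (g : ℂ → ℂ) : ℂ → ℂ :=
  Ω.indicator fun z => g z * ((k (u z) * ‖G z‖ ^ 2 : ℝ) : ℂ)

lemma continuous_layer (H : C1Roof Ω u G) {h : ℝ} (hh : 0 < h) {η k : ℝ → ℝ} (hk : Cut h η k)
    {g : ℂ → ℂ} (hg : Continuous g) : Continuous (layer Ω u G k g) := by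
  refine continuous_indicator_of_eventually_zero H.isOpen ?_ ?_
  · refine hg.continuousOn.mul (Complex.continuous_ofReal.comp_continuousOn ?_)
    exact (hk.contDeriv.comp_continuousOn (H.cont.mono subset_closure)).mul
      ((H.contG.mono subset_closure).norm.pow 2)
  · intro z hz
    filter_upwards [H.eventually_lt hh hz] with w hw hwΩ
    simp [hk.deriv_low _ (hw hwΩ).le]

lemma layer_eq_zero {k : ℝ → ℝ} {g : ℂ → ℂ} {z : ℂ} (hg : g z = 0) :
    layer Ω u G k g z = 0 := by
  by_cases hz : z ∈ Ω <;> simp [layer, hz, hg]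

lemma integrable_layer (H : C1Roof Ω u G) {h : ℝ} (hh : 0 < h) {η k : ℝ → ℝ} (hk : Cut h η k)
    {g : ℂ → ℂ} (hg : Continuous g) (hgc : HasCompactSupport g) :
    Integrable (layer Ω u G k g) := by
  refine (H.continuous_layer hh hk hg).integrable_of_hasCompactSupport ?_
  refine hgc.mono fun z hz => ?_
  contrapose hz
  simp only [Function.mem_support, not_not] at hz ⊢
  exact layer_eq_zero hz

end C1Roof

namespace NearRe

variable {Ω : Set ℂ} {u : ℂ → ℝ} {G : ℂ → (ℂ →L[ℝ] ℝ)} {a ε : ℝ} {φ : ℝ → ℝ}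

lemma norm_mk_lt {x y : ℝ} (hx : |x| ≤ a) (hy : |y| < a) : ‖(⟨x, y⟩ : ℂ)‖ < 2 * a := by
  have := Complex.norm_le_abs_re_add_abs_im (⟨x, y⟩ : ℂ)
  simp only at this
  linarith

lemma continuous_mk_left (y : ℝ) : Continuous fun x : ℝ => (⟨x, y⟩ : ℂ) := by
  have : (fun x : ℝ => (⟨x, y⟩ : ℂ)) = fun x : ℝ => (x : ℂ) + y * Complex.I := by
    ext x; apply Complex.ext <;> simp
  rw [this]; fun_prop

/-- The integral of the layer density across the layer along one horizontal line is close to the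
value of `g` at the boundary point on that line: up to a relative error `O(ε)`, `|∇u|²` may be
replaced by `∂u/∂x`, and then `k(u) ∂u/∂x` is an exact derivative with total integral `1`. -/
lemma inner_estimate (H : NearRe Ω u G (2 * a) ε) (hε : 0 < ε) (hε4 : ε ≤ 1 / 4)
    (h0 : (0 : ℂ) ∈ frontier Ω)
    (hφ : ∀ y, |y| < a → |φ y| < a ∧ (⟨φ y, y⟩ : ℂ) ∈ frontier Ω ∧
      ∀ x, |x| ≤ a → ((⟨x, y⟩ : ℂ) ∈ Ω ↔ φ y < x))
    {h : ℝ} {η k : ℝ → ℝ} (hh : 0 < h) (hk : Cut h η k) {g : ℂ → ℂ} (hg : Continuous g) {τ : ℝ}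
    (hτ : ∀ z w, dist z w ≤ 4 * h → dist (g z) (g w) ≤ τ)
    {y : ℝ} (hy : |y| < a) (hha : 6 * h ≤ a) :
    ‖(∫ x in (φ y)..a, g ⟨x, y⟩ * ((k (u ⟨x, y⟩) * ‖G ⟨x, y⟩‖ ^ 2 : ℝ) : ℂ)) - g ⟨φ y, y⟩‖
      ≤ 5 * τ + 8 * ε * ‖g ⟨φ y, y⟩‖ := by
  obtain ⟨hfa, hfr, hiff⟩ := hφ y hy
  set f := φ y
  have hfa' := abs_lt.1 hfa
  have hle : f ≤ a := hfa'.2.le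
  have habs : ∀ x ∈ Icc f a, |x| ≤ a := fun x hx => abs_le.2 ⟨by linarith [hx.1], hx.2⟩
  have hcl : ∀ x ∈ Icc f a, (⟨x, y⟩ : ℂ) ∈ closure Ω := by
    intro x hx
    rcases hx.1.eq_or_lt with h | h
    · rw [← h]; exact frontier_subset_closure hfr
    · exact subset_closure ((hiff x (habs x hx)).2 h)
  have hmk := continuous_mk_left y
  have hU : ContinuousOn (fun x : ℝ => u ⟨x, y⟩) (Icc f a) :=
    H.cont.comp hmk.continuousOn hcl
  have hGc : ContinuousOn (fun x : ℝ => G ⟨x, y⟩) (Icc f a) :=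
    H.contG.comp hmk.continuousOn hcl
  have hD : ContinuousOn (fun x : ℝ => G ⟨x, y⟩ 1) (Icc f a) := hGc.clm_apply continuousOn_const
  have hder : ∀ x ∈ Ioo f a, HasDerivAt (fun x : ℝ => u ⟨x, y⟩) (G ⟨x, y⟩ 1) x := by
    intro x hx
    have h1 : HasDerivAt (fun x : ℝ => (⟨x, y⟩ : ℂ)) 1 x := by
      have e : (fun x : ℝ => (⟨x, y⟩ : ℂ)) = fun x : ℝ => (x : ℂ) + y * Complex.I := by
        ext x; apply Complex.ext <;> simp
      rw [e]
      simpa using (Complex.ofRealCLM.hasDerivAt (x := x)).add_const (y * Complex.I)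
    exact (H.hasFDeriv _ ((hiff x (habs x ⟨hx.1.le, hx.2.le⟩)).2 hx.1)).comp_hasDerivAt x h1
  have hDb : ∀ x ∈ Icc f a, |G ⟨x, y⟩ 1 - 1| ≤ ε := by
    intro x hx
    simpa using H.apply_near (hcl x hx) (norm_mk_lt (habs x hx) hy) 1
  have hGb : ∀ x ∈ Icc f a, |‖G ⟨x, y⟩‖ - 1| ≤ ε := by
    intro x hx
    have := (abs_norm_sub_norm_le (G ⟨x, y⟩) Complex.reCLM).trans
      (H.near _ (hcl x hx) (norm_mk_lt (habs x hx) hy))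
    rwa [Complex.reCLM_norm] at this
  have hu0 : u ⟨f, y⟩ = 0 := H.zero _ hfr
  -- `u` controls the distance to the boundary along the line
  have hgrow : ∀ x ∈ Icc f a, (x - f) / 2 ≤ u ⟨x, y⟩ := by
    intro x hx
    have key := Convex.mul_sub_le_image_sub_of_le_deriv (convex_Icc f a) hU
      (fun t ht => (hder t (by rwa [interior_Icc] at ht)).differentiableAt.differentiableWithinAt)
      (C := 1 / 2) (fun t ht => by
        rw [interior_Icc] at ht
        rw [(hder t ht).deriv]
        have := (abs_le.1 (hDb t ⟨ht.1.le, ht.2.le⟩)).1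
        linarith) f (left_mem_Icc.2 hle) x hx hx.1
    rw [hu0] at key
    linarith
  have hua : 2 * h ≤ u ⟨a, y⟩ := by
    have h1 := H.abs_re_le h0 hfr (by simpa using (abs_nonneg y).trans_lt hy)
      (norm_mk_lt hfa.le hy)
    have h2 := Complex.norm_le_abs_re_add_abs_im (⟨f, y⟩ - 0 : ℂ)
    simp only [sub_zero] at h1 h2
    have h3 := hgrow a (right_mem_Icc.2 hle)
    have h4 := le_abs_self f
    nlinarith [norm_nonneg (⟨f, y⟩ : ℂ)]
  have hkU : ContinuousOn (fun x : ℝ => k (u ⟨x, y⟩)) (Icc f a) :=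
    hk.contDeriv.comp_continuousOn hU
  have hηU : ContinuousOn (fun x : ℝ => η (u ⟨x, y⟩)) (Icc f a) :=
    (continuous_iff_continuousAt.2 fun t => (hk.hasDeriv t).continuousAt).comp_continuousOn hU
  have hint1 : IntervalIntegrable (fun x : ℝ => k (u ⟨x, y⟩) * G ⟨x, y⟩ 1) volume f a :=
    (hkU.mul hD).intervalIntegrable_of_Icc hle
  have hone : ∫ x in f..a, k (u ⟨x, y⟩) * G ⟨x, y⟩ 1 = 1 := by
    rw [intervalIntegral.integral_eq_sub_of_hasDerivAt_of_le hle hηU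
      (fun x hx => (hk.hasDeriv _).comp x (hder x hx)) hint1]
    rw [hk.eq_one _ hua, hu0, hk.eq_zero _ hh.le, sub_zero]
  have hgf : g ⟨f, y⟩ = ∫ x in f..a, g ⟨f, y⟩ * ((k (u ⟨x, y⟩) * G ⟨x, y⟩ 1 : ℝ) : ℂ) := by
    rw [intervalIntegral.integral_const_mul, intervalIntegral.integral_ofReal, hone]
    simp
  have hint2 : IntervalIntegrable
      (fun x : ℝ => g ⟨x, y⟩ * ((k (u ⟨x, y⟩) * ‖G ⟨x, y⟩‖ ^ 2 : ℝ) : ℂ)) volume f a :=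
    ((hg.comp hmk).continuousOn.mul
      (Complex.continuous_ofReal.comp_continuousOn (hkU.mul (hGc.norm.pow 2)))).intervalIntegrable_of_Icc
        hle
  have hint3 : IntervalIntegrable
      (fun x : ℝ => g ⟨f, y⟩ * ((k (u ⟨x, y⟩) * G ⟨x, y⟩ 1 : ℝ) : ℂ)) volume f a :=
    (continuousOn_const.mul
      (Complex.continuous_ofReal.comp_continuousOn (hkU.mul hD))).intervalIntegrable_of_Icc hle
  set M := 5 * τ + 8 * ε * ‖g ⟨f, y⟩‖
  have hτ0 : 0 ≤ τ := dist_nonneg.trans (hτ 0 0 (by simpa using hh.le))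
  have hbound : ∀ x ∈ Icc f a,
      ‖g ⟨x, y⟩ * ((k (u ⟨x, y⟩) * ‖G ⟨x, y⟩‖ ^ 2 : ℝ) : ℂ)
        - g ⟨f, y⟩ * ((k (u ⟨x, y⟩) * G ⟨x, y⟩ 1 : ℝ) : ℂ)‖
        ≤ M * (k (u ⟨x, y⟩) * G ⟨x, y⟩ 1) := by
    intro x hx
    have hk0 := hk.nonneg (u ⟨x, y⟩)
    rcases le_or_gt (2 * h) (u ⟨x, y⟩) with hc | hc
    · simp [hk.deriv_high _ hc]
    have hxf : x - f ≤ 4 * h := by linarith [hgrow x hx]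
    have hdist : dist (g ⟨x, y⟩) (g ⟨f, y⟩) ≤ τ := by
      apply hτ
      rw [Complex.dist_eq]
      have e : (⟨x, y⟩ : ℂ) - ⟨f, y⟩ = ((x - f : ℝ) : ℂ) := by apply Complex.ext <;> simp
      rw [e, Complex.norm_real, Real.norm_eq_abs, abs_of_nonneg (sub_nonneg.2 hx.1)]
      exact hxf
    rw [dist_eq_norm] at hdist
    obtain ⟨d1, d2⟩ := abs_le.1 (hDb x hx)
    obtain ⟨g1, g2⟩ := abs_le.1 (hGb x hx)
    set K := k (u ⟨x, y⟩)
    set D := G ⟨x, y⟩ 1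
    set N := ‖G ⟨x, y⟩‖
    have hN2 : N ^ 2 ≤ 9 / 4 := by nlinarith
    have hND : |N ^ 2 - D| ≤ 4 * ε := by
      rw [abs_le]; constructor <;> nlinarith
    have e : g ⟨x, y⟩ * ((K * N ^ 2 : ℝ) : ℂ) - g ⟨f, y⟩ * ((K * D : ℝ) : ℂ)
        = (K : ℂ) * ((g ⟨x, y⟩ - g ⟨f, y⟩) * ((N ^ 2 : ℝ) : ℂ)
          + g ⟨f, y⟩ * ((N ^ 2 - D : ℝ) : ℂ)) := by
      push_cast; ring
    rw [e, norm_mul, Complex.norm_real, Real.norm_eq_abs, abs_of_nonneg hk0]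
    have hin : ‖(g ⟨x, y⟩ - g ⟨f, y⟩) * ((N ^ 2 : ℝ) : ℂ) + g ⟨f, y⟩ * ((N ^ 2 - D : ℝ) : ℂ)‖
        ≤ τ * (9 / 4) + ‖g ⟨f, y⟩‖ * (4 * ε) := by
      refine (norm_add_le _ _).trans ?_
      rw [norm_mul, norm_mul, Complex.norm_real, Complex.norm_real, Real.norm_eq_abs,
        Real.norm_eq_abs, abs_of_nonneg (sq_nonneg N)]
      gcongr
    have hMD : τ * (9 / 4) + ‖g ⟨f, y⟩‖ * (4 * ε) ≤ M * D := by
      have hM0 : 0 ≤ M := by positivity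
      have : M * (1 / 2) ≤ M * D := by gcongr; linarith
      simp only [M] at this ⊢
      linarith
    calc K * _ ≤ K * (M * D) := by gcongr; exact hin.trans hMD
      _ = _ := by ring
  calc _ = ‖∫ x in f..a, (g ⟨x, y⟩ * ((k (u ⟨x, y⟩) * ‖G ⟨x, y⟩‖ ^ 2 : ℝ) : ℂ)
        - g ⟨f, y⟩ * ((k (u ⟨x, y⟩) * G ⟨x, y⟩ 1 : ℝ) : ℂ))‖ := by
        rw [intervalIntegral.integral_sub hint2 hint3, ← hgf]
    _ ≤ ∫ x in f..a, M * (k (u ⟨x, y⟩) * G ⟨x, y⟩ 1) := by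
        refine intervalIntegral.norm_integral_le_of_norm_le hle ?_ (hint1.const_mul M)
        filter_upwards with x hx
        exact hbound x ⟨hx.1.le, hx.2⟩
    _ = M := by rw [intervalIntegral.integral_const_mul, hone, mul_one]

end NearRe

/-! ### Layer integrals near a boundary point -/

namespace NearRe

variable {Ω : Set ℂ} {u : ℂ → ℝ} {G : ℂ → (ℂ →L[ℝ] ℝ)} {a ε : ℝ} {φ : ℝ → ℝ}

/-- The open square of half-side `a` about the origin. -/
def box (a : ℝ) : Set ℂ := {z | |z.re| < a ∧ |z.im| < a}

lemma isOpen_box (a : ℝ) : IsOpen (box a) :=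
  (isOpen_lt (f := fun z : ℂ => |z.re|) (g := fun _ => a) (by fun_prop) (by fun_prop)).inter
    (isOpen_lt (f := fun z : ℂ => |z.im|) (g := fun _ => a) (by fun_prop) (by fun_prop))

lemma lipschitzOn_graph (H : NearRe Ω u G (2 * a) ε) (hε : 0 < ε) (hε2 : ε ≤ 1 / 2)
    (hφ : ∀ y, |y| < a → |φ y| < a ∧ (⟨φ y, y⟩ : ℂ) ∈ frontier Ω ∧
      ∀ x, |x| ≤ a → ((⟨x, y⟩ : ℂ) ∈ Ω ↔ φ y < x)) :
    LipschitzOnWith (Real.toNNReal (1 + 2 * ε)) (fun y => (⟨φ y, y⟩ : ℂ)) (Ioo (-a) a) := by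
  refine LipschitzOnWith.of_dist_le_mul fun x hx y hy => ?_
  have hx' := abs_lt.2 hx
  have hy' := abs_lt.2 hy
  have := H.norm_sub_le hε hε2 (hφ y hy').2.1 (hφ x hx').2.1
    (norm_mk_lt (hφ y hy').1.le hy') (norm_mk_lt (hφ x hx').1.le hx')
  rw [Real.coe_toNNReal _ (by positivity), dist_eq_norm, Real.dist_eq]
  simpa using this

/-- Arclength on the graph is squeezed between `1` and `1 + 2ε` times the Lebesgue measure carried
over from the tangential coordinate: the projection is `1`-Lipschitz and its inverse is
`(1 + 2ε)`-Lipschitz. -/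
lemma measure_graph (H : NearRe Ω u G (2 * a) ε) (hε : 0 < ε) (hε2 : ε ≤ 1 / 2)
    (hφ : ∀ y, |y| < a → |φ y| < a ∧ (⟨φ y, y⟩ : ℂ) ∈ frontier Ω ∧
      ∀ x, |x| ≤ a → ((⟨x, y⟩ : ℂ) ∈ Ω ↔ φ y < x)) :
    AEMeasurable (fun y => (⟨φ y, y⟩ : ℂ)) (volume.restrict (Ioo (-a) a)) ∧
    Measure.map (fun y => (⟨φ y, y⟩ : ℂ)) (volume.restrict (Ioo (-a) a)) ≤
      (μH[1] : Measure ℂ).restrict (frontier Ω ∩ box a) ∧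
    (μH[1] : Measure ℂ).restrict (frontier Ω ∩ box a) ≤ ENNReal.ofReal (1 + 2 * ε) •
      Measure.map (fun y => (⟨φ y, y⟩ : ℂ)) (volume.restrict (Ioo (-a) a)) := by
  have hL := H.lipschitzOn_graph hε hε2 hφ
  have hm : AEMeasurable (fun y => (⟨φ y, y⟩ : ℂ)) (volume.restrict (Ioo (-a) a)) :=
    hL.continuousOn.aemeasurable measurableSet_Ioo
  refine ⟨hm, ?_, ?_⟩
  · refine Measure.le_iff.2 fun s hs => ?_
    rw [Measure.map_apply_of_aemeasurable hm hs, Measure.restrict_apply' measurableSet_Ioo,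
      Measure.restrict_apply hs, ← hausdorffMeasure_real]
    have hsub : (fun y => (⟨φ y, y⟩ : ℂ)) ⁻¹' s ∩ Ioo (-a) a ⊆
        Complex.im '' (s ∩ (frontier Ω ∩ box a)) := by
      rintro y ⟨hys, hy⟩
      have hy' := abs_lt.2 hy
      exact ⟨⟨φ y, y⟩, ⟨hys, (hφ y hy').2.1, (hφ y hy').1, hy'⟩, rfl⟩
    refine (measure_mono hsub).trans ?_
    have him : LipschitzWith 1 Complex.im := LipschitzWith.of_dist_le_mul fun z w => by
      rw [Real.dist_eq, Complex.dist_eq, ← Complex.sub_im]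
      simpa using Complex.abs_im_le_norm (z - w)
    simpa using him.hausdorffMeasure_image_le (d := 1) zero_le_one (s ∩ (frontier Ω ∩ box a))
  · refine Measure.le_iff.2 fun s hs => ?_
    rw [Measure.smul_apply, Measure.map_apply_of_aemeasurable hm hs,
      Measure.restrict_apply' measurableSet_Ioo,
      Measure.restrict_apply hs, ← hausdorffMeasure_real]
    have hsub : s ∩ (frontier Ω ∩ box a) ⊆ (fun y => (⟨φ y, y⟩ : ℂ)) ''
        ((fun y => (⟨φ y, y⟩ : ℂ)) ⁻¹' s ∩ Ioo (-a) a) := by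
      rintro z ⟨hzs, hzf, hzr, hzi⟩
      have hw := hφ z.im hzi
      have hzn : ‖z‖ < 2 * a := by
        have := Complex.norm_le_abs_re_add_abs_im z
        linarith
      -- a boundary point is determined by its tangential coordinate
      have := H.norm_sub_le hε hε2 hw.2.1 hzf (norm_mk_lt hw.1.le hzi) hzn
      have h2 : z = ⟨φ z.im, z.im⟩ := by
        rw [← sub_eq_zero, ← norm_le_zero_iff]
        simpa using this
      refine ⟨z.im, ⟨?_, abs_lt.1 hzi⟩, h2.symm⟩
      rw [mem_preimage, ← h2]; exact hzs
    refine (measure_mono hsub).trans ?_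
    have := (hL.mono (inter_subset_right (s := (fun y => (⟨φ y, y⟩ : ℂ)) ⁻¹' s))
      ).hausdorffMeasure_image_le (d := 1) zero_le_one
    simpa [ENNReal.ofReal] using this

lemma integral_eq_iterated {F : ℂ → ℂ} (hF : Integrable F) :
    Integrable (fun y : ℝ => ∫ x : ℝ, F ⟨x, y⟩) ∧
    ∫ z, F z = ∫ y : ℝ, ∫ x : ℝ, F ⟨x, y⟩ := by
  have e := Complex.volume_preserving_equiv_real_prod.symm
  have hF' : Integrable (fun p : ℝ × ℝ => F (Complex.measurableEquivRealProd.symm p))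
      ((volume : Measure ℝ).prod volume) := by
    rw [← Measure.volume_eq_prod]
    exact (e.integrable_comp_emb (MeasurableEquiv.measurableEmbedding _)).2 hF
  refine ⟨hF'.integral_prod_right, ?_⟩
  rw [← e.integral_comp (MeasurableEquiv.measurableEmbedding _), Measure.volume_eq_prod,
    integral_prod_symm _ hF']
  rfl

/-- In the square about a boundary point, the layer integrals of `g` approximate the arclength
integral of `g` up to a relative error `O(ε)`. -/
lemma local_estimate (H : NearRe Ω u G (2 * a) ε) (hε : 0 < ε) (hε4 : ε ≤ 1 / 4)
    (ha : 0 < a) (h0 : (0 : ℂ) ∈ frontier Ω) :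
    μH[1] (frontier Ω ∩ box a) < ⊤ ∧
    ∀ g : ℂ → ℂ, Continuous g → HasCompactSupport g → (∀ z ∉ box a, g z = 0) → ∀ δ > 0,
      ∃ h₀ > 0, ∀ h, 0 < h → h < h₀ → ∀ η k, Cut h η k →
        ‖(∫ z, C1Roof.layer Ω u G k g z) - ∫ z in frontier Ω, g z ∂μH[1]‖
          ≤ 10 * ε * (∫ z in frontier Ω, ‖g z‖ ∂μH[1]) + δ := by
  have hε2 : ε ≤ 1 / 2 := by linarith
  obtain ⟨φ, hφ⟩ := H.exists_graph hε hε2 ha h0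
  obtain ⟨hm, hν1, hν2⟩ := H.measure_graph hε hε2 hφ
  set γ : ℝ → ℂ := fun y => (⟨φ y, y⟩ : ℂ) with hγ
  set ν := Measure.map γ (volume.restrict (Ioo (-a) a)) with hν
  set B := (μH[1] : Measure ℂ).restrict (frontier Ω ∩ box a) with hB
  have : IsFiniteMeasure ν := by rw [hν]; infer_instance
  have hBfin : IsFiniteMeasure B := by
    refine ⟨(hν2 univ).trans_lt ?_⟩
    rw [Measure.smul_apply, smul_eq_mul]
    exact ENNReal.mul_lt_top ENNReal.ofReal_lt_top (measure_lt_top _ _)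
  refine ⟨by simpa [hB] using measure_lt_top B univ, ?_⟩
  intro g hg hgc hgb δ hδ
  have hBint : ∀ {E : Type} [NormedAddCommGroup E] [NormedSpace ℝ E] (f : ℂ → E),
      (∀ z ∉ box a, f z = 0) → ∫ z in frontier Ω, f z ∂μH[1] = ∫ z, f z ∂B := by
    intro E _ _ f hf
    have h1 : B = ((μH[1] : Measure ℂ).restrict (frontier Ω)).restrict (box a) := by
      rw [Measure.restrict_restrict (isOpen_box a).measurableSet, inter_comm, hB]
    rw [h1, setIntegral_eq_integral_of_forall_compl_eq_zero hf]
  rw [hBint g hgb, hBint (fun z => ‖g z‖) (fun z hz => by simp [hgb z hz])]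
  obtain ⟨C, hC⟩ := hgc.exists_bound_of_continuous hg
  have hgB : Integrable g B :=
    Integrable.of_bound hg.aestronglyMeasurable C (ae_of_all _ hC)
  have hgν : Integrable g ν :=
    Integrable.of_bound hg.aestronglyMeasurable C (ae_of_all _ hC)
  -- replacing arclength by the tangential coordinate
  have hcomp : ‖(∫ z, g z ∂ν) - ∫ z, g z ∂B‖ ≤ 2 * ε * ∫ z, ‖g z‖ ∂ν := by
    have hsplit : (B - ν) + ν = B := Measure.sub_add_cancel_of_le hν1
    have hle : B - ν ≤ B := Measure.sub_le
    have hgs : Integrable g (B - ν) := hgB.mono_measure hle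
    have e1 : ∫ z, g z ∂B = ∫ z, g z ∂(B - ν) + ∫ z, g z ∂ν := by
      conv_lhs => rw [← hsplit]
      exact integral_add_measure hgs hgν
    have e2 : ∫ z, ‖g z‖ ∂B = ∫ z, ‖g z‖ ∂(B - ν) + ∫ z, ‖g z‖ ∂ν := by
      conv_lhs => rw [← hsplit]
      exact integral_add_measure hgs.norm hgν.norm
    have e3 : ∫ z, ‖g z‖ ∂B ≤ (1 + 2 * ε) * ∫ z, ‖g z‖ ∂ν := by
      refine (integral_mono_measure hν2 (ae_of_all _ fun z => norm_nonneg _)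
        (hgν.norm.smul_measure ENNReal.ofReal_ne_top)).trans ?_
      rw [integral_smul_measure, ENNReal.toReal_ofReal (by positivity), smul_eq_mul]
    have e4 := norm_integral_le_integral_norm (μ := B - ν) g
    rw [e1, norm_sub_rev, add_sub_cancel_right]
    linarith
  have hmono : ∫ z, ‖g z‖ ∂ν ≤ ∫ z, ‖g z‖ ∂B :=
    integral_mono_measure hν1 (ae_of_all _ fun z => norm_nonneg _) hgB.norm
  have hu := hgc.uniformContinuous_of_continuous hg
  obtain ⟨d, hd, hdist⟩ := Metric.uniformContinuous_iff.1 hu (δ / (10 * a)) (by positivity)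
  refine ⟨min (d / 4) (a / 6), by positivity, fun h hh hh₀ η k hk => ?_⟩
  have hh1 := hh₀.trans_le (min_le_left _ _)
  have hh2 := hh₀.trans_le (min_le_right _ _)
  have hlayer := H.integrable_layer hh hk hg hgc
  obtain ⟨hJi, hJ⟩ := integral_eq_iterated hlayer
  have hJzero : ∀ y ∉ Ioo (-a) a, ∫ x : ℝ, C1Roof.layer Ω u G k g ⟨x, y⟩ = 0 := by
    intro y hy
    refine integral_eq_zero_of_ae (ae_of_all _ fun x => ?_)
    exact C1Roof.layer_eq_zero (hgb _ fun hz => hy (abs_lt.1 hz.2))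
  have hJy : ∀ y ∈ Ioo (-a) a,
      ‖(∫ x : ℝ, C1Roof.layer Ω u G k g ⟨x, y⟩) - g (γ y)‖
        ≤ 5 * (δ / (10 * a)) + 8 * ε * ‖g (γ y)‖ := by
    intro y hy
    have hy' := abs_lt.2 hy
    obtain ⟨hfa, -, hiff⟩ := hφ y hy'
    have e : (∫ x : ℝ, C1Roof.layer Ω u G k g ⟨x, y⟩) =
        ∫ x in (φ y)..a, g ⟨x, y⟩ * ((k (u ⟨x, y⟩) * ‖G ⟨x, y⟩‖ ^ 2 : ℝ) : ℂ) := by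
      rw [intervalIntegral.integral_of_le (abs_lt.1 hfa).2.le,
        ← integral_indicator measurableSet_Ioc]
      congr 1
      ext x
      by_cases hx : |x| < a
      · by_cases hm : (⟨x, y⟩ : ℂ) ∈ Ω
        · have : x ∈ Ioc (φ y) a := ⟨(hiff x hx.le).1 hm, (abs_lt.1 hx).2.le⟩
          simp [C1Roof.layer, hm, this]
        · have : x ∉ Ioc (φ y) a := fun h => hm ((hiff x hx.le).2 h.1)
          simp [C1Roof.layer, hm, this]
      · have hg0 : g ⟨x, y⟩ = 0 := hgb _ fun hz => hx hz.1
        rw [C1Roof.layer_eq_zero hg0]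
        simp [indicator, hg0]
    rw [e]
    refine H.inner_estimate hε hε4 h0 hφ hh hk hg ?_ hy' (by linarith)
    intro z w hzw
    exact (hdist (hzw.trans_lt (by linarith))).le
  have hgγ : Integrable (fun y => g (γ y)) (volume.restrict (Ioo (-a) a)) :=
    hgν.comp_aemeasurable hm
  have hmain : ‖(∫ z, C1Roof.layer Ω u G k g z) - ∫ z, g z ∂ν‖
      ≤ δ + 8 * ε * ∫ z, ‖g z‖ ∂ν := by
    rw [hJ, ← setIntegral_eq_integral_of_forall_compl_eq_zero hJzero, hν,
      integral_map hm hg.aestronglyMeasurable, integral_map hm hg.norm.aestronglyMeasurable,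
      ← integral_sub hJi.integrableOn hgγ]
    refine (norm_integral_le_of_norm_le (g := fun y => 5 * (δ / (10 * a)) + 8 * ε * ‖g (γ y)‖)
      ((integrable_const _).add (hgγ.norm.const_mul _)) ?_).trans ?_
    · filter_upwards [ae_restrict_mem measurableSet_Ioo] with y hy using hJy y hy
    · rw [integral_add (integrable_const _) (hgγ.norm.const_mul _), integral_const_mul (8 * ε)]
      apply le_of_eq
      simp [Measure.real, ENNReal.toReal_ofReal, ha.le]
      field_simp
      ring
  have e5 : (∫ z, C1Roof.layer Ω u G k g z) - ∫ z, g z ∂B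
      = ((∫ z, C1Roof.layer Ω u G k g z) - ∫ z, g z ∂ν)
        + ((∫ z, g z ∂ν) - ∫ z, g z ∂B) := by ring
  rw [e5]
  refine (norm_add_le _ _).trans ?_
  nlinarith

end NearRe

/-! ### Localization by rigid motions -/

lemma norm_sq_clm (L : ℂ →L[ℝ] ℝ) : ‖L‖ ^ 2 = L 1 ^ 2 + L Complex.I ^ 2 := by
  have hL : ∀ v : ℂ, L v = v.re * L 1 + v.im * L Complex.I := by
    intro v
    conv_lhs => rw [← Complex.re_add_im v]
    rw [map_add, mul_comm (v.im : ℂ)]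
    have h1 : L ((v.re : ℂ)) = v.re * L 1 := by
      have := L.map_smul v.re 1
      simpa using this
    have h2 : L (Complex.I * (v.im : ℂ)) = v.im * L Complex.I := by
      have := L.map_smul v.im Complex.I
      rw [mul_comm]
      simpa using this
    rw [h1, h2]
  have hN : 0 ≤ L 1 ^ 2 + L Complex.I ^ 2 := by positivity
  have : ‖L‖ = √(L 1 ^ 2 + L Complex.I ^ 2) := by
    refine ContinuousLinearMap.opNorm_eq_of_bounds (Real.sqrt_nonneg _) (fun v => ?_) ?_
    · rw [Complex.norm_eq_sqrt_sq_add_sq, ← Real.sqrt_mul hN, Real.norm_eq_abs]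
      apply Real.abs_le_sqrt
      rw [hL v]
      nlinarith [sq_nonneg (v.re * L Complex.I - v.im * L 1)]
    · intro N hN0 hb
      have h := hb ⟨L 1, L Complex.I⟩
      rw [Complex.norm_eq_sqrt_sq_add_sq] at h
      simp only at h
      rw [hL, Real.norm_eq_abs] at h
      simp only at h
      have h2 : L 1 * L 1 + L Complex.I * L Complex.I = √(L 1 ^ 2 + L Complex.I ^ 2) *
        √(L 1 ^ 2 + L Complex.I ^ 2) := by rw [Real.mul_self_sqrt hN]; ring
      rw [h2, abs_of_nonneg (by positivity)] at h
      rcases (Real.sqrt_nonneg (L 1 ^ 2 + L Complex.I ^ 2)).eq_or_lt with h0 | h0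
      · rw [← h0]; exact hN0
      · exact le_of_mul_le_mul_right h h0
  rw [this, Real.sq_sqrt hN]

/-- A functional of norm one on `ℂ ≅ ℝ²` becomes the real part after a rotation. -/
lemma exists_rotation {L : ℂ →L[ℝ] ℝ} (hL : ‖L‖ = 1) :
    ∃ R : ℂ ≃ₗᵢ[ℝ] ℂ, L.comp (R.toContinuousLinearEquiv : ℂ →L[ℝ] ℂ) = Complex.reCLM := by
  have h1 : L 1 ^ 2 + L Complex.I ^ 2 = 1 := by rw [← norm_sq_clm, hL]; norm_num
  have he : (⟨L 1, L Complex.I⟩ : ℂ) ∈ Submonoid.unitSphere ℂ := by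
    refine mem_sphere_zero_iff_norm.2 ?_
    rw [Complex.norm_eq_sqrt_sq_add_sq]
    simp [h1]
  refine ⟨rotation ⟨_, he⟩, ?_⟩
  have hz : ∀ v : ℂ, L v = v.re * L 1 + v.im * L Complex.I := by
    intro v
    have h1 := L.map_smul v.re 1
    have h2 := L.map_smul v.im Complex.I
    simp only [Complex.real_smul, mul_one, smul_eq_mul] at h1 h2
    rw [← h1, ← h2, ← map_add, Complex.re_add_im]
  ext v
  change L ((⟨L 1, L Complex.I⟩ : ℂ) * v) = v.re
  rw [hz]
  simp only [Complex.mul_re, Complex.mul_im]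
  linear_combination v.re * h1

namespace C1Roof

variable {Ω : Set ℂ} {u : ℂ → ℝ} {G : ℂ → (ℂ →L[ℝ] ℝ)}

/-- The rigid motion `w ↦ z₀ + R w`. -/
noncomputable def motion (z₀ : ℂ) (R : ℂ ≃ₗᵢ[ℝ] ℂ) : ℂ ≃ᵢ ℂ :=
  R.toIsometryEquiv.trans (IsometryEquiv.addLeft z₀)

lemma motion_apply (z₀ : ℂ) (R : ℂ ≃ₗᵢ[ℝ] ℂ) (w : ℂ) : motion z₀ R w = z₀ + R w := rfl

lemma measurePreserving_motion (z₀ : ℂ) (R : ℂ ≃ₗᵢ[ℝ] ℂ) :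
    MeasurePreserving (motion z₀ R) (volume : Measure ℂ) volume :=
  (measurePreserving_add_left volume z₀).comp R.measurePreserving

lemma comp_motion (H : C1Roof Ω u G) (z₀ : ℂ) (R : ℂ ≃ₗᵢ[ℝ] ℂ) :
    C1Roof (motion z₀ R ⁻¹' Ω) (u ∘ motion z₀ R)
      (fun w => (G (motion z₀ R w)).comp (R.toContinuousLinearEquiv : ℂ →L[ℝ] ℂ)) := by
  have hc : closure (motion z₀ R ⁻¹' Ω) = motion z₀ R ⁻¹' closure Ω :=
    ((motion z₀ R).toHomeomorph.preimage_closure Ω).symm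
  have hf : frontier (motion z₀ R ⁻¹' Ω) = motion z₀ R ⁻¹' frontier Ω :=
    ((motion z₀ R).toHomeomorph.preimage_frontier Ω).symm
  refine ⟨H.isOpen.preimage (motion z₀ R).continuous, ?_, ?_, ?_, fun z hz => H.pos _ hz, ?_⟩
  · rw [hc]
    exact H.cont.comp (motion z₀ R).continuous.continuousOn (mapsTo_preimage _ _)
  · rw [hc]
    exact (H.contG.comp (motion z₀ R).continuous.continuousOn (mapsTo_preimage _ _)).clm_comp
      continuousOn_const
  · intro w hw
    refine (H.hasFDeriv _ hw).comp w ?_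
    exact (R.toContinuousLinearEquiv : ℂ →L[ℝ] ℂ).hasFDerivAt.const_add z₀
  · rw [hf]
    exact fun z hz => H.zero _ hz

/-- Near a boundary point at which `‖∇u‖ = 1`, the boundary has finite length, and the layer
integrals approximate boundary integrals up to the relative error `10 ε`. -/
lemma local_estimate (H : C1Roof Ω u G) {z₀ : ℂ} (hz₀ : z₀ ∈ frontier Ω) (hG : ‖G z₀‖ = 1)
    {ε : ℝ} (hε : 0 < ε) (hε4 : ε ≤ 1 / 4) :
    ∃ U : Set ℂ, IsOpen U ∧ z₀ ∈ U ∧ μH[1] (frontier Ω ∩ U) < ⊤ ∧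
      ∀ g : ℂ → ℂ, Continuous g → HasCompactSupport g → (∀ z ∉ U, g z = 0) → ∀ δ > 0,
        ∃ h₀ > 0, ∀ h, 0 < h → h < h₀ → ∀ η k, Cut h η k →
          ‖(∫ z, layer Ω u G k g z) - ∫ z in frontier Ω, g z ∂μH[1]‖ ≤
            10 * ε * (∫ z in frontier Ω, ‖g z‖ ∂μH[1]) + δ := by
  obtain ⟨R, hR⟩ := exists_rotation hG
  set Φ := motion z₀ R with hΦ
  have hΦ0 : Φ 0 = z₀ := by simp [hΦ, motion_apply]
  have hc : closure (Φ ⁻¹' Ω) = Φ ⁻¹' closure Ω := (Φ.toHomeomorph.preimage_closure Ω).symm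
  have hf : frontier (Φ ⁻¹' Ω) = Φ ⁻¹' frontier Ω := (Φ.toHomeomorph.preimage_frontier Ω).symm
  have H' := H.comp_motion z₀ R
  rw [← hΦ] at H'
  set G' : ℂ → (ℂ →L[ℝ] ℝ) := fun w =>
    (G (Φ w)).comp (R.toContinuousLinearEquiv : ℂ →L[ℝ] ℂ) with hG'
  have h0 : (0 : ℂ) ∈ frontier (Φ ⁻¹' Ω) := by rw [hf]; simpa [hΦ0] using hz₀
  have hG0 : G' 0 = Complex.reCLM := by simp only [hG', hΦ0]; exact hR
  obtain ⟨ρ, hρ, hnear⟩ := Metric.continuousWithinAt_iff.1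
    (H'.contG 0 (frontier_subset_closure h0)) ε hε
  have hN : NearRe (Φ ⁻¹' Ω) (u ∘ Φ) G' (2 * (ρ / 2)) ε := by
    refine ⟨H', fun z hz hzρ => ?_⟩
    have := hnear hz (by simpa using by linarith)
    rw [hG0, dist_eq_norm] at this
    exact this.le
  obtain ⟨hfin, hest⟩ := hN.local_estimate hε hε4 (half_pos hρ) h0
  have hmp := Φ.measurePreserving_hausdorffMeasure 1
  have hchange : ∀ {E : Type} [NormedAddCommGroup E] [NormedSpace ℝ E] (f : ℂ → E),
      ∫ w in frontier (Φ ⁻¹' Ω), f (Φ w) ∂μH[1] = ∫ z in frontier Ω, f z ∂μH[1] := by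
    intro E _ _ f
    rw [hf]
    exact hmp.setIntegral_preimage_emb Φ.toHomeomorph.measurableEmbedding f _
  refine ⟨Φ.symm ⁻¹' NearRe.box (ρ / 2), (NearRe.isOpen_box _).preimage Φ.symm.continuous, ?_, ?_,
    ?_⟩
  · have : Φ.symm z₀ = 0 := by rw [← hΦ0]; simp
    simp [this, NearRe.box, hρ]
  · have : frontier (Φ ⁻¹' Ω) ∩ NearRe.box (ρ / 2) =
        Φ ⁻¹' (frontier Ω ∩ Φ.symm ⁻¹' NearRe.box (ρ / 2)) := by
      rw [hf]; ext w; simp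
    rw [this, hmp.measure_preimage_emb Φ.toHomeomorph.measurableEmbedding] at hfin
    exact hfin
  · intro g hg hgc hg0 δ hδ
    obtain ⟨h₀, hh₀, hk⟩ := hest (g ∘ Φ) (hg.comp Φ.continuous)
      (hgc.comp_homeomorph Φ.toHomeomorph) (fun z hz => hg0 _ (by simpa using hz)) δ hδ
    refine ⟨h₀, hh₀, fun h h1 h2 η k hcut => ?_⟩
    have hmain := hk h h1 h2 η k hcut
    have e1 := hchange g
    have e2 := hchange fun z => ‖g z‖
    have e3 : ∫ w, layer (Φ ⁻¹' Ω) (u ∘ Φ) G' k (g ∘ Φ) w = ∫ z, layer Ω u G k g z := by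
      refine Eq.trans ?_ ((measurePreserving_motion z₀ R).integral_comp
        Φ.toHomeomorph.measurableEmbedding (layer Ω u G k g))
      refine integral_congr_ae (Eventually.of_forall fun w => ?_)
      have hn : ‖G' w‖ = ‖G (Φ w)‖ :=
        ContinuousLinearMap.opNorm_comp_linearIsometryEquiv _ R
      change layer (Φ ⁻¹' Ω) (u ∘ Φ) G' k (g ∘ Φ) w = layer Ω u G k g (Φ w)
      by_cases hw : Φ w ∈ Ω
      · simp only [layer]
        rw [indicator_of_mem (show w ∈ Φ ⁻¹' Ω from hw), indicator_of_mem hw, hn]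
        rfl
      · simp only [layer]
        rw [indicator_of_notMem (show w ∉ Φ ⁻¹' Ω from hw), indicator_of_notMem hw]
    rw [e3] at hmain
    simp only [Function.comp] at hmain
    rw [e1, e2] at hmain
    exact hmain

end C1Roof

/-! ### Convergence of the layer integrals -/

namespace C1Roof

variable {Ω : Set ℂ} {u : ℂ → ℝ} {G : ℂ → (ℂ →L[ℝ] ℝ)}

lemma integrableOn_frontier (hfc : IsCompact (frontier Ω)) (hfin : μH[1] (frontier Ω) < ⊤)
    {E : Type*} [NormedAddCommGroup E] {g : ℂ → E}
    (hg : ContinuousOn g (frontier Ω)) : IntegrableOn g (frontier Ω) μH[1] := by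
  obtain ⟨C, hC⟩ := hfc.exists_bound_of_continuousOn hg
  exact IntegrableOn.of_bound hfin
    (hg.aestronglyMeasurable_of_isCompact hfc isClosed_frontier.measurableSet) C
    ((ae_restrict_mem isClosed_frontier.measurableSet).mono fun z hz => hC z hz)

lemma measure_frontier_lt_top (H : C1Roof Ω u G) (hfc : IsCompact (frontier Ω))
    (hG : ∀ z ∈ frontier Ω, ‖G z‖ = 1) : μH[1] (frontier Ω) < ⊤ := by
  refine hfc.measure_lt_top_of_nhdsWithin fun z hz => ?_
  obtain ⟨U, hU, hzU, hfin, -⟩ := H.local_estimate hz (hG z hz) (ε := 1 / 4) (by norm_num) le_rfl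
  exact ⟨frontier Ω ∩ U, inter_mem self_mem_nhdsWithin (mem_nhdsWithin_of_mem_nhds
    (hU.mem_nhds hzU)), hfin⟩

/-- A test function vanishing near the boundary does not see the thin layers. -/
lemma eventually_layer_eq_zero (H : C1Roof Ω u G) {g : ℂ → ℂ}
    (hgc : HasCompactSupport g) {L : Set ℂ} (hL : frontier Ω ⊆ interior L)
    (hg0 : ∀ z ∈ L, g z = 0) :
    ∀ᶠ h in 𝓝[>] (0 : ℝ), ∀ η k, Cut h η k → ∀ z, layer Ω u G k g z = 0 := by
  have hcpt : IsCompact (tsupport g ∩ (closure Ω \ interior L)) :=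
    hgc.isCompact.inter_right (isClosed_closure.sdiff isOpen_interior)
  have hsub : tsupport g ∩ (closure Ω \ interior L) ⊆ Ω := by
    rintro z ⟨-, hz, hzL⟩
    by_contra hzΩ
    exact hzL (hL (by rw [H.isOpen.frontier_eq]; exact ⟨hz, hzΩ⟩))
  have hlow : ∃ c > 0, ∀ z ∈ tsupport g ∩ (closure Ω \ interior L), c ≤ u z := by
    rcases (tsupport g ∩ (closure Ω \ interior L)).eq_empty_or_nonempty with he | hne
    · exact ⟨1, one_pos, by simp [he]⟩
    · obtain ⟨z, hz, hmin⟩ := hcpt.exists_isMinOn hne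
        (H.cont.mono (hsub.trans subset_closure))
      exact ⟨u z, H.pos z (hsub hz), fun w hw => hmin hw⟩
  obtain ⟨c, hc, hcu⟩ := hlow
  filter_upwards [Ioo_mem_nhdsGT (half_pos hc)] with h hh η k hk z
  by_cases hgz : g z = 0
  · exact layer_eq_zero hgz
  by_cases hz : z ∈ Ω
  · have : c ≤ u z := hcu z ⟨subset_tsupport g hgz, subset_closure hz, fun hzL =>
      hgz (hg0 z (interior_subset hzL))⟩
    have h2 := hh.2
    simp [layer, hz, hk.deriv_high (u z) (by linarith)]
  · simp [layer, hz]

/-- As the cutoff scale tends to zero, the layer integrals of a test function converge to its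
arclength integral over the boundary. A partition of unity reduces this to the local estimate. -/
lemma layer_tendsto (H : C1Roof Ω u G) (hfc : IsCompact (frontier Ω))
    (hG : ∀ z ∈ frontier Ω, ‖G z‖ = 1) {g : ℂ → ℂ} (hg : Continuous g)
    (hgc : HasCompactSupport g) {δ : ℝ} (hδ : 0 < δ) :
    ∀ᶠ h in 𝓝[>] (0 : ℝ), ∀ η k, Cut h η k →
      ‖(∫ z, layer Ω u G k g z) - ∫ z in frontier Ω, g z ∂μH[1]‖ ≤ δ := by
  have hfin := H.measure_frontier_lt_top hfc hG
  set M := ∫ z in frontier Ω, ‖g z‖ ∂μH[1] with hM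
  have hM0 : 0 ≤ M := integral_nonneg fun z => norm_nonneg _
  set ε := min (1 / 4) (δ / (20 * (M + 1))) with hε
  have hε0 : 0 < ε := by positivity
  have hεM : 10 * ε * M ≤ δ / 2 := by
    have h1 : ε ≤ δ / (20 * (M + 1)) := min_le_right _ _
    rw [le_div_iff₀ (by positivity)] at h1
    nlinarith
  have hloc : ∀ z : frontier Ω, ∃ U : Set ℂ, IsOpen U ∧ (z : ℂ) ∈ U ∧
      ∀ g : ℂ → ℂ, Continuous g → HasCompactSupport g → (∀ z ∉ U, g z = 0) → ∀ δ > 0,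
        ∃ h₀ > 0, ∀ h, 0 < h → h < h₀ → ∀ η k, Cut h η k →
          ‖(∫ z, layer Ω u G k g z) - ∫ z in frontier Ω, g z ∂μH[1]‖ ≤
            10 * ε * (∫ z in frontier Ω, ‖g z‖ ∂μH[1]) + δ := by
    intro z
    obtain ⟨U, h1, h2, -, h3⟩ := H.local_estimate z.2 (hG z z.2) hε0 (min_le_left _ _)
    exact ⟨U, h1, h2, h3⟩
  choose U hUo hzU hest using hloc
  obtain ⟨t, ht⟩ := hfc.elim_finite_subcover U hUo fun z hz => mem_iUnion.2 ⟨⟨z, hz⟩, hzU ⟨z, hz⟩⟩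
  obtain ⟨L, hLc, hfL, hLU⟩ := exists_compact_between hfc
    (isOpen_biUnion fun i (_ : i ∈ t) => hUo i) ht
  obtain ⟨n, ⟨e⟩⟩ : ∃ n, Nonempty (t ≃ Fin n) := ⟨_, ⟨t.equivFin⟩⟩
  obtain ⟨f, hfs, hf1, hf01, hfcs⟩ := exists_continuous_sum_one_of_isOpen_isCompact
    (s := fun i => U (e.symm i)) (fun i => hUo _) hLc (by
      intro z hz
      obtain ⟨i, hi, hzi⟩ := mem_iUnion₂.1 (hLU hz)
      exact mem_iUnion.2 ⟨e ⟨i, hi⟩, by simpa using hzi⟩)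
  have hsum1 : ∀ z ∈ L, ∑ i, f i z = 1 := fun z hz => by
    have := hf1 hz
    simpa using this
  set gi : Fin n → ℂ → ℂ := fun i z => (f i z : ℂ) * g z with hgi
  set g0 : ℂ → ℂ := fun z => (1 - ∑ i, (f i z : ℂ)) * g z with hg0
  have hgic : ∀ i, Continuous (gi i) := fun i =>
    (Complex.continuous_ofReal.comp (f i).continuous).mul hg
  have hgis : ∀ i, HasCompactSupport (gi i) := fun i => hgc.mul_left
  have hg0c : Continuous g0 := by
    refine (continuous_const.sub (continuous_finsetSum _ fun i _ => ?_)).mul hg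
    exact Complex.continuous_ofReal.comp (f i).continuous
  have hg0s : HasCompactSupport g0 := hgc.mul_left
  have hg0L : ∀ z ∈ L, g0 z = 0 := fun z hz => by
    have := hsum1 z hz
    simp only [hg0]
    rw [← Complex.ofReal_sum, this]; simp
  have hsplit : ∀ z, g z = (∑ i, gi i z) + g0 z := fun z => by
    simp only [hgi, hg0, ← Finset.sum_mul]; ring
  have hfL' : frontier Ω ⊆ L := hfL.trans interior_subset
  have hev1 : ∀ᶠ h in 𝓝[>] (0 : ℝ), ∀ i, ∀ η k, Cut h η k →
      ‖(∫ z, layer Ω u G k (gi i) z) - ∫ z in frontier Ω, gi i z ∂μH[1]‖ ≤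
            10 * ε * (∫ z in frontier Ω, ‖gi i z‖ ∂μH[1]) + δ / (2 * (n + 1)) := by
    rw [eventually_all]
    intro i
    obtain ⟨h₀, hh₀, hk⟩ := hest (e.symm i) (gi i) (hgic i) (hgis i) (fun z hz => by
      have : z ∉ tsupport (f i) := fun h => hz (hfs i h)
      simp [hgi, image_eq_zero_of_notMem_tsupport this]) (δ / (2 * (n + 1))) (by positivity)
    filter_upwards [Ioo_mem_nhdsGT hh₀] with h hh
    exact hk h hh.1 hh.2
  filter_upwards [hev1, H.eventually_layer_eq_zero hg0s hfL hg0L, self_mem_nhdsWithin]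
    with h h1 h2 hh η k hk
  have hh : 0 < h := hh
  have eq1 : ∫ z, layer Ω u G k g z = ∑ i, ∫ z, layer Ω u G k (gi i) z := by
    rw [← integral_finsetSum _ fun i _ => H.integrable_layer hh hk (hgic i) (hgis i)]
    refine integral_congr_ae (Eventually.of_forall fun z => ?_)
    have h3 := h2 η k hk z
    simp only [layer] at h3 ⊢
    by_cases hz : z ∈ Ω
    · simp only [indicator_of_mem hz] at h3 ⊢
      rw [hsplit z, add_mul, h3, add_zero, Finset.sum_mul]
    · simp [hz]
  have eq2 : ∫ z in frontier Ω, g z ∂μH[1] = ∑ i, ∫ z in frontier Ω, gi i z ∂μH[1] := by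
    rw [← integral_finsetSum _ fun i _ => integrableOn_frontier hfc hfin (hgic i).continuousOn]
    refine setIntegral_congr_fun isClosed_frontier.measurableSet fun z hz => ?_
    rw [hsplit z, hg0L z (hfL' hz), add_zero]
  have eq3 : M = ∑ i, ∫ z in frontier Ω, ‖gi i z‖ ∂μH[1] := by
    rw [hM, ← integral_finsetSum _ fun i _ =>
      (integrableOn_frontier hfc hfin (hgic i).continuousOn).norm]
    refine setIntegral_congr_fun isClosed_frontier.measurableSet fun z hz => ?_
    simp only [hgi, norm_mul, ← Finset.sum_mul, Complex.norm_real, Real.norm_eq_abs]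
    simp only [abs_of_nonneg (hf01 _ z).1]
    rw [hsum1 z (hfL' hz), one_mul]
  rw [eq1, eq2, ← Finset.sum_sub_distrib]
  refine (norm_sum_le _ _).trans ((Finset.sum_le_sum fun i _ => h1 i η k hk).trans ?_)
  rw [Finset.sum_add_distrib, ← Finset.mul_sum, ← eq3]
  have : ∑ _i : Fin n, δ / (2 * ((n : ℝ) + 1)) ≤ δ / 2 := by
    rw [Finset.sum_const, Finset.card_univ, Fintype.card_fin, nsmul_eq_mul,
      ← mul_div_assoc, div_le_div_iff₀ (by positivity) (by norm_num)]
    nlinarith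
  linarith

end C1Roof

/-! ### Integration by parts -/

namespace C1Roof

variable {Ω : Set ℂ} {u : ℂ → ℝ} {G : ℂ → (ℂ →L[ℝ] ℝ)}

/-- A continuous function on `Ω` that is zero where `u < h` and outside a compact set is integrable. -/
lemma integrable_indicator (H : C1Roof Ω u G) {h : ℝ} (hh : 0 < h) {Q : ℂ → ℂ}
    (hQ : ContinuousOn Q Ω) (hQu : ∀ z, u z < h → Q z = 0) {S : Set ℂ} (hS : IsCompact S)
    (hQS : ∀ z ∉ S, Q z = 0) : Integrable (Ω.indicator Q) := by
  refine (continuous_indicator_of_eventually_zero H.isOpen hQ fun z hz => ?_)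
    |>.integrable_of_hasCompactSupport (HasCompactSupport.intro hS fun z hz => ?_)
  · filter_upwards [H.eventually_lt hh hz] with w hw hwΩ
    exact hQu w (hw hwΩ)
  · by_cases hzΩ : z ∈ Ω <;> simp [hzΩ, hQS z hz]

/-- Integration by parts for `η(u) χ F`, with `F` holomorphic on `Ω`: since
`∂/∂x + i ∂/∂y` annihilates `F`, it only falls on `η(u)` and on `χ`. -/
lemma integral_by_parts (H : C1Roof Ω u G) {h : ℝ} (hh : 0 < h) {η k : ℝ → ℝ} (hk : Cut h η k)
    {F : ℂ → ℂ} (hF : DifferentiableOn ℂ F Ω) {χ : ℂ → ℝ} (hχ : ContDiff ℝ 1 χ)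
    (hχc : HasCompactSupport χ) :
    ∫ z, Ω.indicator (fun z => ((χ z * k (u z) : ℝ) : ℂ) *
        ((G z 1 : ℂ) + Complex.I * (G z Complex.I : ℂ)) * F z) z =
      -∫ z, Ω.indicator (fun z => (η (u z) : ℂ) *
        ((fderiv ℝ χ z 1 : ℂ) + Complex.I * (fderiv ℝ χ z Complex.I : ℂ)) * F z) z := by
  have hu : ContinuousOn u Ω := H.cont.mono subset_closure
  have hG : ContinuousOn G Ω := H.contG.mono subset_closure
  have hηu : ContinuousOn (fun z => η (u z)) Ω :=
    (continuous_iff_continuousAt.2 fun t => (hk.hasDeriv t).continuousAt).comp_continuousOn hu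
  have hku : ContinuousOn (fun z => k (u z)) Ω := hk.contDeriv.comp_continuousOn hu
  have hF' : ContinuousOn (deriv F) Ω := (hF.deriv H.isOpen).continuousOn
  have hGv : ∀ v, ContinuousOn (fun z => G z v) Ω := fun v => hG.clm_apply continuousOn_const
  have hχv : ∀ v, Continuous fun z => fderiv ℝ χ z v := fun v =>
    (hχ.continuous_fderiv one_ne_zero).clm_apply continuous_const
  have hFc := hF.continuousOn
  have hχc0 := hχ.continuous
  have hχ0 : ∀ z ∉ tsupport χ, χ z = 0 := fun z hz => image_eq_zero_of_notMem_tsupport hz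
  have hχ'0 : ∀ z ∉ tsupport χ, fderiv ℝ χ z = 0 := fun z hz =>
    image_eq_zero_of_notMem_tsupport fun h => hz (tsupport_fderiv_subset ℝ h)
  set D : ℂ → ℂ → ℂ := fun v z =>
    ((fderiv ℝ χ z v * η (u z) + χ z * (k (u z) * G z v) : ℝ) : ℂ) * F z +
      ((χ z * η (u z) : ℝ) : ℂ) * (deriv F z * v) with hD
  have hDint : ∀ v, Integrable (Ω.indicator (D v)) := by
    intro v
    refine H.integrable_indicator hh ?_ ?_ hχc.isCompact ?_
    · have h1 := hχv v
      have h2 := hGv v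
      refine (ContinuousOn.mul (Complex.continuous_ofReal.comp_continuousOn ?_) hFc).add
        (ContinuousOn.mul (Complex.continuous_ofReal.comp_continuousOn ?_) ?_)
      · exact (h1.continuousOn.mul hηu).add (hχc0.continuousOn.mul (hku.mul h2))
      · exact hχc0.continuousOn.mul hηu
      · exact hF'.mul continuousOn_const
    · intro z hz
      simp [hD, hk.eq_zero _ hz.le, hk.deriv_low _ hz.le]
    · intro z hz
      simp [hD, hχ0 z hz, hχ'0 z hz]
  set Ψ : ℂ → ℂ := Ω.indicator fun z => ((χ z * η (u z) : ℝ) : ℂ) * F z with hΨ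
  have hΨint : Integrable Ψ := by
    refine H.integrable_indicator hh ?_ ?_ hχc.isCompact ?_
    · exact (Complex.continuous_ofReal.comp_continuousOn (hχc0.continuousOn.mul hηu)).mul hFc
    · intro z hz
      simp [hk.eq_zero _ hz.le]
    · intro z hz
      simp [hχ0 z hz]
  have hder : ∀ v z, HasLineDerivAt ℝ Ψ (Ω.indicator (D v) z) z v := by
    intro v z
    have hline : Tendsto (fun t : ℝ => z + t • v) (𝓝 0) (𝓝 z) := by
      have : Continuous fun t : ℝ => z + t • v := by fun_prop
      simpa using this.tendsto 0
    by_cases hz : z ∈ Ω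
    · have hl : HasDerivAt (fun t : ℝ => z + t • v) v 0 := by
        simpa using ((hasDerivAt_id (0 : ℝ)).smul_const v).const_add z
      have e0 : z + (0 : ℝ) • v = z := by simp
      have h1 : HasDerivAt (fun t : ℝ => χ (z + t • v)) (fderiv ℝ χ z v) 0 := by
        have : HasFDerivAt χ (fderiv ℝ χ z) (z + (0 : ℝ) • v) := by
          rw [e0]; exact (hχ.differentiable one_ne_zero z).hasFDerivAt
        exact this.comp_hasDerivAt 0 hl
      have h2 : HasDerivAt (fun t : ℝ => u (z + t • v)) (G z v) 0 := by
        have : HasFDerivAt u (G z) (z + (0 : ℝ) • v) := by rw [e0]; exact H.hasFDeriv z hz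
        exact this.comp_hasDerivAt 0 hl
      have h3 : HasDerivAt (fun t : ℝ => η (u (z + t • v))) (k (u z) * G z v) 0 := by
        have := (hk.hasDeriv (u (z + (0 : ℝ) • v))).comp (0 : ℝ) h2
        rw [e0] at this
        exact this
      have h4 : HasDerivAt (fun t : ℝ => F (z + t • v)) (deriv F z * v) 0 := by
        have : HasDerivAt F (deriv F z) (z + (0 : ℝ) • v) := by
          rw [e0]; exact (hF.differentiableAt (H.isOpen.mem_nhds hz)).hasDerivAt
        exact this.comp 0 hl
      have h5 := ((h1.mul h3).ofReal_comp).mul h4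
      rw [HasLineDerivAt, indicator_of_mem hz]
      refine HasDerivAt.congr_of_eventuallyEq (f := fun t : ℝ =>
        ((χ (z + t • v) * η (u (z + t • v)) : ℝ) : ℂ) * F (z + t • v)) ?_ ?_
      · refine HasDerivAt.congr_deriv h5 ?_
        simp [hD]
      · filter_upwards [hline (H.isOpen.mem_nhds hz)] with t ht
        simp only [hΨ, indicator_of_mem (show z + t • v ∈ Ω from ht)]
    · rw [HasLineDerivAt, indicator_of_notMem hz]
      refine (hasDerivAt_const (0 : ℝ) (0 : ℂ)).congr_of_eventuallyEq ?_
      filter_upwards [hline.eventually (H.eventually_lt hh hz)] with t ht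
      by_cases htΩ : z + t • v ∈ Ω
      · simp only [hΨ, indicator_of_mem htΩ, hk.eq_zero _ (ht htΩ).le]
        simp
      · simp only [hΨ, indicator_of_notMem htΩ]
  have hzero : ∀ v, ∫ z, Ω.indicator (D v) z = 0 := by
    intro v
    have := integral_bilinear_hasLineDerivAt_right_eq_neg_left_of_integrable
      (μ := (volume : Measure ℂ)) (f := fun _ : ℂ => (1 : ℂ)) (f' := fun _ => 0) (g := Ψ)
      (g' := Ω.indicator (D v)) (v := v) (B := ContinuousLinearMap.mul ℝ ℂ)
      (by simp) (by simpa using hDint v) (by simpa using hΨint)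
      (fun x _ => by simpa [HasLineDerivAt] using hasDerivAt_const (0 : ℝ) (1 : ℂ))
      (fun x _ => hder v x)
    simpa using this
  have hA : Integrable (Ω.indicator fun z => ((χ z * k (u z) : ℝ) : ℂ) *
        ((G z 1 : ℂ) + Complex.I * (G z Complex.I : ℂ)) * F z) := by
    refine H.integrable_indicator hh ?_ ?_ hχc.isCompact ?_
    · refine ((Complex.continuous_ofReal.comp_continuousOn (hχc0.continuousOn.mul hku)).mul
        ((Complex.continuous_ofReal.comp_continuousOn (hGv 1)).add (continuousOn_const.mul
        (Complex.continuous_ofReal.comp_continuousOn (hGv Complex.I))))).mul hFc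
    · intro z hz
      simp [hk.deriv_low _ hz.le]
    · intro z hz
      simp [hχ0 z hz]
  have hB : Integrable (Ω.indicator fun z => (η (u z) : ℂ) *
        ((fderiv ℝ χ z 1 : ℂ) + Complex.I * (fderiv ℝ χ z Complex.I : ℂ)) * F z) := by
    refine H.integrable_indicator hh ?_ ?_ hχc.isCompact ?_
    · refine ((Complex.continuous_ofReal.comp_continuousOn hηu).mul
        ((Complex.continuous_ofReal.comp (hχv 1)).add (continuous_const.mul
        (Complex.continuous_ofReal.comp (hχv Complex.I)))).continuousOn).mul hFc
    · intro z hz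
      simp [hk.eq_zero _ hz.le]
    · intro z hz
      simp [hχ'0 z hz]
  rw [eq_neg_iff_add_eq_zero, ← integral_add hA hB]
  have h1 : ∫ z, (Ω.indicator (D 1) z + Complex.I * Ω.indicator (D Complex.I) z) = 0 := by
    rw [integral_add (hDint 1) ((hDint _).const_mul _), integral_const_mul, hzero, hzero]
    simp
  rw [← h1]
  refine integral_congr_ae (Eventually.of_forall fun z => ?_)
  by_cases hz : z ∈ Ω
  · simp only [indicator_of_mem hz, hD]
    push_cast
    linear_combination (-(χ z : ℂ) * η (u z) * deriv F z) * Complex.I_mul_I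
  · simp [hz]

end C1Roof

/-! ### Positive harmonic functions on exterior domains: growth -/

open InnerProductSpace in
lemma harmonicOnNhd_of_harmonicOnC {u : ℂ → ℝ} {Ω : Set ℂ} (hΩ : IsOpen Ω)
    (hu : HarmonicOnC u Ω) : HarmonicOnNhd u Ω := by
  intro z hz
  refine ⟨hu.1 z hz, ?_⟩
  filter_upwards [hΩ.mem_nhds hz] with w hw
  have hd : DifferentiableAt ℝ (fderiv ℝ u) w :=
    ((hu.1 w hw).fderiv_right (m := 1) (by norm_num)).differentiableAt one_ne_zero
  have hv : ∀ v : ℂ, fderiv ℝ (fun w => fderiv ℝ u w v) w v = fderiv ℝ (fderiv ℝ u) w v v := by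
    intro v
    rw [fderiv_clm_apply hd (by fun_prop)]
    simp
  have h := hu.2 w hw
  rw [lapC, hv, hv] at h
  rw [laplacian_eq_iteratedFDeriv_complexPlane]
  simpa [iteratedFDeriv_two_apply] using h

/-- The holomorphic gradient `∂u/∂x - i ∂u/∂y = 2 ∂u/∂z` of a real function `u`. -/
noncomputable def holGrad (u : ℂ → ℝ) (z : ℂ) : ℂ :=
  (fderiv ℝ u z 1 : ℂ) - Complex.I * (fderiv ℝ u z Complex.I : ℂ)

lemma fderiv_eq_re_holGrad (u : ℂ → ℝ) (z v : ℂ) : fderiv ℝ u z v = (v * holGrad u z).re := by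
  have h1 := (fderiv ℝ u z).map_smul v.re 1
  have h2 := (fderiv ℝ u z).map_smul v.im Complex.I
  simp only [Complex.real_smul, mul_one, smul_eq_mul] at h1 h2
  conv_lhs => rw [← Complex.re_add_im v, map_add, h1, h2]
  simp [holGrad]

namespace HarmonicExterior

open InnerProductSpace

variable {u : ℂ → ℝ}

/-- Gradient estimate for positive harmonic functions: Borel–Carathéodory for the analytic
completion, followed by the Cauchy estimate on the disc of half the radius. -/
lemma norm_holGrad_le {c : ℂ} {ρ : ℝ} (hρ : 0 < ρ) (hu : HarmonicOnNhd u (ball c ρ))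
    (hpos : ∀ z ∈ ball c ρ, 0 < u z) : ‖holGrad u c‖ ≤ 4 * u c / ρ := by
  obtain ⟨F, hF, hFu⟩ := hu.exists_analyticOnNhd_ball_re_eq
  have hc : c ∈ ball c ρ := mem_ball_self hρ
  have hFd : DifferentiableOn ℂ F (ball c ρ) := hF.differentiableOn
  have hder : deriv F c = holGrad u c := by
    have h1 : HasDerivAt F (deriv F c) c :=
      (hFd.differentiableAt (isOpen_ball.mem_nhds hc)).hasDerivAt
    have h2 := Complex.reCLM.hasFDerivAt.comp c (h1.hasFDerivAt.restrictScalars ℝ)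
    have h3 : u =ᶠ[𝓝 c] Complex.reCLM ∘ F := by
      filter_upwards [isOpen_ball.mem_nhds hc] with z hz
      exact (hFu hz).symm
    have h4 := (h2.congr_of_eventuallyEq h3).fderiv
    rw [holGrad, h4]
    apply Complex.ext <;> simp
  have hbound : ∀ z ∈ sphere c (ρ / 2), ‖F z - F c‖ ≤ 2 * u c := by
    intro z hz
    have hzn : ‖z - c‖ = ρ / 2 := by simpa [dist_eq_norm] using hz
    have := Complex.borelCaratheodory_zero (f := fun w => -(F (c + w) - F c)) (M := u c) (R := ρ)
      (z := z - c) (hpos c hc) ?_ ?_ hρ ?_ (by simp)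
    · simp only [add_sub_cancel, norm_neg, hzn] at this
      refine this.trans (le_of_eq ?_)
      field_simp
      ring
    · refine ((hFd.comp (by fun_prop) ?_).sub_const _).neg
      intro w hw
      simpa using hw
    · intro w hw
      have hw' : c + w ∈ ball c ρ := by simpa using hw
      have e1 : (F (c + w)).re = u (c + w) := hFu hw'
      have e2 : (F c).re = u c := hFu hc
      have := hpos _ hw'
      change (-(F (c + w) - F c)).re ≤ u c
      simp only [Complex.neg_re, Complex.sub_re, e1, e2]
      linarith
    · simp only [mem_ball, dist_zero_right, hzn]; linarith
  have hcl : closedBall c (ρ / 2) ⊆ ball c ρ := closedBall_subset_ball (by linarith)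
  have := Complex.norm_deriv_le_of_forall_mem_sphere_norm_le (f := fun z => F z - F c)
    (c := c) (half_pos hρ) ?_ hbound
  · rw [deriv_sub_const, hder] at this
    refine this.trans (le_of_eq ?_)
    field_simp
    ring
  · refine DifferentiableOn.diffContOnCl ?_
    rw [closure_ball _ (half_pos hρ).ne']
    exact (hFd.mono hcl).sub_const _

variable {R₀ : ℝ}

lemma ball_subset {z : ℂ} (hz : 2 * R₀ < ‖z‖) :
    ball z (‖z‖ / 2) ⊆ {w : ℂ | R₀ < ‖w‖} := by
  intro w hw
  rw [mem_ball, dist_eq_norm] at hw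
  have := norm_sub_norm_le z w
  rw [norm_sub_rev] at this
  change R₀ < ‖w‖
  linarith

lemma norm_holGrad_le_div (hR : 0 < R₀) (hu : HarmonicOnNhd u {z | R₀ < ‖z‖})
    (hpos : ∀ z, R₀ < ‖z‖ → 0 < u z) {z : ℂ} (hz : 2 * R₀ < ‖z‖) :
    ‖holGrad u z‖ ≤ 8 * u z / ‖z‖ := by
  have hz0 : 0 < ‖z‖ := by linarith
  have := norm_holGrad_le (half_pos hz0) (hu.mono (ball_subset hz))
    (fun w hw => hpos w (ball_subset hz hw))
  refine this.trans (le_of_eq ?_)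
  field_simp
  ring

lemma hasDerivAt_ray (hu : HarmonicOnNhd u {z | R₀ < ‖z‖}) {w : ℂ} (hw : ‖w‖ = 1) {t : ℝ}
    (hR : 0 < R₀) (ht : R₀ < t) :
    HasDerivAt (fun t : ℝ => u (t * w)) ((w * holGrad u (t * w)).re) t := by
  have hn : ‖(t : ℂ) * w‖ = t := by simp [hw, abs_of_pos (hR.trans ht)]
  have hd : DifferentiableAt ℝ u (t * w) :=
    (hu (t * w) (by change R₀ < _; rw [hn]; exact ht)).1.differentiableAt two_ne_zero
  rw [← fderiv_eq_re_holGrad]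
  have hl : HasDerivAt (fun t : ℝ => (t : ℂ) * w) w t := by
    simpa using (Complex.ofRealCLM.hasDerivAt (x := t)).mul_const w
  exact hd.hasFDerivAt.comp_hasDerivAt t hl

/-- A positive harmonic function on an exterior domain has a gradient of polynomial growth:
along rays, the gradient estimate bounds the logarithmic derivative of `u` by `8 / t`. -/
lemma exists_growth (hR : 0 < R₀) (hu : HarmonicOnNhd u {z | R₀ < ‖z‖})
    (hpos : ∀ z, R₀ < ‖z‖ → 0 < u z) :
    ∃ C, ∀ z, 3 * R₀ ≤ ‖z‖ → ‖holGrad u z‖ ≤ C * ‖z‖ ^ 8 := by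
  obtain ⟨M, hM⟩ := (isCompact_sphere (0 : ℂ) (3 * R₀)).exists_bound_of_continuousOn (f := u)
    (fun z hz => (hu z (by
      have : ‖z‖ = 3 * R₀ := by simpa using hz
      change R₀ < ‖z‖; rw [this]; linarith)).1.continuousAt.continuousWithinAt)
  refine ⟨8 / (3 * R₀) * (M / (3 * R₀) ^ 8), fun z hz => ?_⟩
  have hz0 : 0 < ‖z‖ := by linarith
  set w : ℂ := z / ‖z‖ with hw
  have hw1 : ‖w‖ = 1 := by simp [hw, hz0.ne']
  have hzw : (‖z‖ : ℂ) * w = z := by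
    rw [hw]; field_simp [Complex.ofReal_ne_zero.2 hz0.ne']
  have hn : ∀ t : ℝ, 0 < t → ‖(t : ℂ) * w‖ = t := fun t ht => by simp [hw1, abs_of_pos ht]
  have hanti : AntitoneOn (fun t : ℝ => u (t * w) / t ^ 8) (Ici (3 * R₀)) := by
    have hd : ∀ t : ℝ, 3 * R₀ ≤ t → HasDerivAt (fun t : ℝ => u (t * w) / t ^ 8)
        (((w * holGrad u (t * w)).re * t ^ 8 - u (t * w) * (8 * t ^ 7)) / (t ^ 8) ^ 2) t := by
      intro t ht
      have ht0 : 0 < t := by linarith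
      have := (hasDerivAt_ray hu hw1 hR (by linarith)).div (hasDerivAt_pow 8 t)
        (pow_pos ht0 8).ne'
      exact this.congr_deriv (by norm_num)
    refine antitoneOn_of_deriv_nonpos (convex_Ici _)
      (fun t ht => (hd t ht).continuousAt.continuousWithinAt)
      (fun t ht => (hd t (interior_subset ht)).differentiableAt.differentiableWithinAt) ?_
    intro t ht
    have ht := interior_subset ht
    have ht : 3 * R₀ ≤ t := ht
    have ht0 : 0 < t := by linarith
    rw [(hd t ht).deriv]
    refine div_nonpos_of_nonpos_of_nonneg ?_ (by positivity)
    have h1 := norm_holGrad_le_div hR hu hpos (z := t * w) (by rw [hn t ht0]; linarith)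
    rw [hn t ht0, le_div_iff₀ ht0] at h1
    have h2 : (w * holGrad u (t * w)).re ≤ ‖holGrad u (t * w)‖ := by
      refine (Complex.re_le_norm _).trans ?_
      rw [norm_mul, hw1, one_mul]
    have h3 : (w * holGrad u (t * w)).re * t ≤ 8 * u (t * w) :=
      (mul_le_mul_of_nonneg_right h2 ht0.le).trans h1
    nlinarith [mul_le_mul_of_nonneg_right h3 (pow_pos ht0 7).le]
  have h1 := hanti (self_mem_Ici) (show ‖z‖ ∈ Ici (3 * R₀) from hz) hz
  simp only [hzw] at h1
  have h2 : u ((3 * R₀ : ℝ) * w) ≤ M := (le_abs_self _).trans (hM _ (by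
    simp only [mem_sphere, dist_zero_right]; exact hn _ (by linarith)))
  have h3 : u z ≤ M / (3 * R₀) ^ 8 * ‖z‖ ^ 8 := by
    rw [← div_le_iff₀ (by positivity)]
    exact h1.trans (by gcongr)
  have h4 := norm_holGrad_le_div hR hu hpos (z := z) (by linarith)
  calc ‖holGrad u z‖ ≤ 8 * u z / ‖z‖ := h4
    _ = 8 / ‖z‖ * u z := by ring
    _ ≤ 8 / (3 * R₀) * u z := by
        have := (hpos z (by linarith)).le
        gcongr
    _ ≤ 8 / (3 * R₀) * (M / (3 * R₀) ^ 8 * ‖z‖ ^ 8) := by gcongr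
    _ = _ := by ring

end HarmonicExterior

/-! ### Positive harmonic functions on exterior domains: decay of the gradient -/

namespace HarmonicExterior

open InnerProductSpace

variable {u : ℂ → ℝ} {R₀ : ℝ}

lemma differentiableAt_holGrad (hu : HarmonicOnNhd u {z | R₀ < ‖z‖}) {z : ℂ} (hz : R₀ < ‖z‖) :
    DifferentiableAt ℂ (holGrad u) z :=
  HarmonicAt.differentiableAt_complex_partial (hu z hz)

/-- Polynomial growth of the gradient means that it has at most a pole at infinity. -/
lemma meromorphicAt_inv (hR : 0 < R₀) (hu : HarmonicOnNhd u {z | R₀ < ‖z‖})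
    (hpos : ∀ z, R₀ < ‖z‖ → 0 < u z) : MeromorphicAt (fun w => holGrad u w⁻¹) 0 := by
  obtain ⟨C, hC⟩ := exists_growth hR hu hpos
  have hr : 0 < (3 * R₀)⁻¹ := by positivity
  have hlarge : ∀ w ∈ ball (0 : ℂ) (3 * R₀)⁻¹ \ {0}, w ≠ 0 ∧ 3 * R₀ ≤ ‖w⁻¹‖ := by
    intro w hw
    have h0 : w ≠ 0 := hw.2
    have h1 : ‖w‖ < (3 * R₀)⁻¹ := by simpa using hw.1
    refine ⟨h0, ?_⟩
    rw [norm_inv, le_inv_comm₀ (by positivity) (norm_pos_iff.2 h0)]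
    exact h1.le
  have hd : DifferentiableOn ℂ (fun w : ℂ => w ^ 8 * holGrad u w⁻¹)
      (ball 0 (3 * R₀)⁻¹ \ {0}) := by
    intro w hw
    obtain ⟨h0, h1⟩ := hlarge w hw
    have := (differentiableAt_holGrad hu (z := w⁻¹) (by linarith)).comp w
      (differentiableAt_inv h0)
    exact ((differentiableAt_id.pow 8).mul this).differentiableWithinAt
  have hb : BddAbove (norm ∘ (fun w : ℂ => w ^ 8 * holGrad u w⁻¹) ''
      (ball 0 (3 * R₀)⁻¹ \ {0})) := by
    refine ⟨C, ?_⟩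
    rintro _ ⟨w, hw, rfl⟩
    obtain ⟨h0, h1⟩ := hlarge w hw
    have h2 := hC _ h1
    have hw0 : 0 < ‖w‖ := norm_pos_iff.2 h0
    simp only [Function.comp, norm_mul, norm_pow]
    calc ‖w‖ ^ 8 * ‖holGrad u w⁻¹‖ ≤ ‖w‖ ^ 8 * (C * ‖w⁻¹‖ ^ 8) := by gcongr
      _ = C := by rw [norm_inv]; field_simp
  have hA := (Complex.differentiableOn_update_limUnder_of_bddAbove
    (ball_mem_nhds (0 : ℂ) hr) hd hb).analyticAt (ball_mem_nhds (0 : ℂ) hr)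
  have hM := ((MeromorphicAt.id (0 : ℂ)).pow 8).inv.mul hA.meromorphicAt
  refine hM.congr ?_
  filter_upwards [self_mem_nhdsWithin] with w hw
  have h0 : w ≠ 0 := hw
  simp only [Pi.mul_apply, Pi.inv_apply, Pi.pow_apply, id, Function.update_of_ne h0]
  field_simp

/-- If the gradient behaved like `c z ^ m` with `m ≥ 0` and `c ≠ 0` at infinity, then `u` would
decrease to `-∞` along a ray on which `z ^ (m + 1) c` is negative. -/
lemma not_asymptotic_pow (hR : 0 < R₀) (hu : HarmonicOnNhd u {z | R₀ < ‖z‖})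
    (hpos : ∀ z, R₀ < ‖z‖ → 0 < u z) {m : ℕ} {g : ℂ → ℂ} (hg : ContinuousAt g 0) (hg0 : g 0 ≠ 0)
    (hq : ∀ᶠ w in 𝓝[≠] (0 : ℂ), holGrad u w⁻¹ = w⁻¹ ^ m * g w) : False := by
  set c := g 0 with hc
  have hcn : 0 < ‖c‖ := norm_pos_iff.2 hg0
  obtain ⟨ω, hω⟩ := IsAlgClosed.exists_pow_nat_eq (-(‖c‖ : ℂ) / c) (Nat.succ_pos m)
  have hω1 : ‖ω‖ = 1 := by
    have h : ‖ω‖ ^ (m + 1) = 1 := by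
      rw [← norm_pow, hω]; simp [hcn.ne']
    exact (pow_eq_one_iff_of_nonneg (norm_nonneg _) (Nat.succ_ne_zero m)).1 h
  have hω0 : ω ≠ 0 := by rw [← norm_pos_iff, hω1]; exact one_pos
  have hev : ∀ᶠ w in 𝓝 (0 : ℂ), (ω ^ (m + 1) * g w).re < -‖c‖ / 2 := by
    have h1 : ContinuousAt (fun w => (ω ^ (m + 1) * g w).re) 0 :=
      Complex.continuous_re.continuousAt.comp (continuousAt_const.mul hg)
    refine h1.eventually_lt continuousAt_const ?_
    rw [hω, ← hc, div_mul_cancel₀ _ hg0]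
    simp only [Complex.neg_re, Complex.ofReal_re]
    linarith
  obtain ⟨ρ, hρ, hball⟩ := Metric.eventually_nhds_iff.1
    (hev.and (eventually_nhdsWithin_iff.1 hq))
  set T := max (max 1 (2 * R₀)) (2 / ρ) with hT
  have hT1 : 1 ≤ T := (le_max_left _ _).trans (le_max_left _ _)
  have hTR : 2 * R₀ ≤ T := (le_max_right _ _).trans (le_max_left _ _)
  have hTρ : 2 / ρ ≤ T := le_max_right _ _
  have hder : ∀ t, T ≤ t → HasDerivAt (fun t : ℝ => u (t * ω))
      ((ω * holGrad u (t * ω)).re) t := fun t ht =>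
    hasDerivAt_ray hu hω1 hR (by linarith)
  have hneg : ∀ t, T ≤ t → (ω * holGrad u (t * ω)).re ≤ -‖c‖ / 2 := by
    intro t ht
    have ht0 : 0 < t := by linarith
    have htω : (t : ℂ) * ω ≠ 0 := mul_ne_zero (Complex.ofReal_ne_zero.2 ht0.ne') hω0
    have hn : ‖((t : ℂ) * ω)⁻¹‖ < ρ := by
      rw [norm_inv, norm_mul, hω1, mul_one, Complex.norm_real, Real.norm_eq_abs, abs_of_pos ht0]
      have : 2 / ρ ≤ t := hTρ.trans ht
      rw [div_le_iff₀ hρ] at this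
      rw [inv_lt_iff_one_lt_mul₀ ht0]
      linarith
    obtain ⟨h1, h2⟩ := hball (y := ((t : ℂ) * ω)⁻¹) (by simpa using hn)
    have h3 := h2 (inv_ne_zero htω)
    rw [inv_inv] at h3
    have h4 : ω * holGrad u (t * ω) = ((t ^ m : ℝ) : ℂ) * (ω ^ (m + 1) * g ((t : ℂ) * ω)⁻¹) := by
      rw [h3]; push_cast; ring
    rw [h4, Complex.re_ofReal_mul]
    have h5 : 1 ≤ t ^ m := one_le_pow₀ (hT1.trans ht)
    nlinarith
  have hdec := Convex.image_sub_le_mul_sub_of_deriv_le (convex_Ici T)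
    (f := fun t : ℝ => u (t * ω)) (fun t ht => (hder t ht).continuousAt.continuousWithinAt)
    (fun t ht => (hder t (interior_subset ht)).differentiableAt.differentiableWithinAt)
    (C := -‖c‖ / 2) (fun t ht => by
      rw [(hder t (interior_subset ht)).deriv]; exact hneg t (interior_subset ht))
  have hup : ∀ t, T ≤ t → 0 < u (t * ω) := fun t ht => hpos _ (by
    have ht0 : 0 < t := by linarith
    rw [norm_mul, hω1, mul_one, Complex.norm_real, Real.norm_eq_abs, abs_of_pos ht0]
    linarith)
  have hs : 0 ≤ 2 * u (T * ω) / ‖c‖ := by have := hup T le_rfl; positivity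
  have h1 := hdec T self_mem_Ici (T + 2 * u (T * ω) / ‖c‖) (by simpa using hs) (by simpa using hs)
  have h2 := hup (T + 2 * u (T * ω) / ‖c‖) (by simpa using hs)
  simp only [add_sub_cancel_left] at h1
  have h3 : -‖c‖ / 2 * (2 * u (T * ω) / ‖c‖) = -u (T * ω) := by field_simp
  rw [h3] at h1
  linarith

/-- The gradient of a positive harmonic function on an exterior planar domain is `O(1 / |z|)`. -/
lemma exists_decay (hR : 0 < R₀) (hu : HarmonicOnNhd u {z | R₀ < ‖z‖})
    (hpos : ∀ z, R₀ < ‖z‖ → 0 < u z) :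
    ∃ M R₁, 0 < M ∧ ∀ z, R₁ < ‖z‖ → ‖holGrad u z‖ ≤ M / ‖z‖ := by
  have hmer := meromorphicAt_inv hR hu hpos
  -- it suffices to bound the gradient in the coordinate `w = 1 / z`
  suffices h : ∃ M, 0 < M ∧ ∀ᶠ w in 𝓝[≠] (0 : ℂ), ‖holGrad u w⁻¹‖ ≤ M * ‖w‖ by
    obtain ⟨M, hM, hev⟩ := h
    obtain ⟨ρ, hρ, hball⟩ := Metric.eventually_nhds_iff.1 (eventually_nhdsWithin_iff.1 hev)
    refine ⟨M, ρ⁻¹, hM, fun z hz => ?_⟩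
    have hz0 : 0 < ‖z‖ := (inv_pos.2 hρ).trans hz
    have := hball (y := z⁻¹) (by
      rw [dist_zero_right, norm_inv]; exact inv_lt_of_inv_lt₀ hρ hz)
      (inv_ne_zero (norm_pos_iff.1 hz0))
    rwa [inv_inv, norm_inv, ← div_eq_mul_inv] at this
  rcases eq_or_ne (meromorphicOrderAt (fun w => holGrad u w⁻¹) 0) ⊤ with htop | htop
  · refine ⟨1, one_pos, ?_⟩
    filter_upwards [meromorphicOrderAt_eq_top_iff.1 htop] with w hw
    rw [hw]; simp
  obtain ⟨n, hn⟩ := WithTop.ne_top_iff_exists.1 htop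
  obtain ⟨g, hg, hg0, hgq⟩ := (meromorphicOrderAt_eq_int_iff hmer).1 hn.symm
  simp only [sub_zero, smul_eq_mul] at hgq
  rcases lt_or_ge 0 n with hn0 | hn0
  · refine ⟨‖g 0‖ + 1, by positivity, ?_⟩
    have h1 : ∀ᶠ w in 𝓝[≠] (0 : ℂ), ‖g w‖ < ‖g 0‖ + 1 :=
      (hg.continuousAt.norm.eventually_lt continuousAt_const (by simp)).filter_mono
        nhdsWithin_le_nhds
    have h2 : ∀ᶠ w in 𝓝[≠] (0 : ℂ), ‖w‖ < 1 := by
      refine Filter.Eventually.filter_mono nhdsWithin_le_nhds ?_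
      filter_upwards [ball_mem_nhds (0 : ℂ) one_pos] with w hw
      simpa using hw
    filter_upwards [hgq, h1, h2, self_mem_nhdsWithin] with w hw hw1 hw2 hw0
    obtain ⟨j, rfl⟩ : ∃ j : ℕ, n = j + 1 := ⟨(n - 1).toNat, by omega⟩
    rw [hw, norm_mul, norm_zpow, zpow_add_one₀ (norm_ne_zero_iff.2 hw0), zpow_natCast]
    have h3 : ‖w‖ ^ j ≤ 1 := pow_le_one₀ (norm_nonneg _) hw2.le
    calc ‖w‖ ^ j * ‖w‖ * ‖g w‖ ≤ 1 * ‖w‖ * (‖g 0‖ + 1) := by gcongr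
      _ = _ := by ring
  · exfalso
    obtain ⟨m, rfl⟩ : ∃ m : ℕ, n = -m := ⟨(-n).toNat, by omega⟩
    refine not_asymptotic_pow hR hu hpos (m := m) hg.continuousAt hg0 ?_
    filter_upwards [hgq] with w hw
    rw [hw, zpow_neg, zpow_natCast, inv_pow]

end HarmonicExterior

/-! ### The term at infinity -/

/-- Smooth cutoffs at scale `R`, equal to `1` on the disc of radius `R`, with gradient of size
`O(1 / R)` supported in `R ≤ |z| ≤ 2 R`. -/
lemma exists_cutoff : ∃ A, 0 < A ∧ ∀ R : ℝ, 0 < R → ∃ χ : ℂ → ℝ, ContDiff ℝ 1 χ ∧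
    HasCompactSupport χ ∧ (∀ z, ‖z‖ ≤ R → χ z = 1) ∧ (∀ z, ‖z‖ < R → fderiv ℝ χ z = 0) ∧
    (∀ z, 2 * R < ‖z‖ → fderiv ℝ χ z = 0) ∧ ∀ z, ‖fderiv ℝ χ z‖ ≤ A / R := by
  let f : ContDiffBump (0 : ℂ) := ⟨1, 2, one_pos, one_lt_two⟩
  have hf : ContDiff ℝ 1 f := f.contDiff
  obtain ⟨A, hA⟩ := (f.hasCompactSupport.fderiv ℝ).exists_bound_of_continuous
    (hf.continuous_fderiv one_ne_zero)
  refine ⟨max A 1, by positivity, fun R hR => ?_⟩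
  have hRi : R⁻¹ ≠ 0 := (inv_pos.2 hR).ne'
  have hn : ∀ z : ℂ, ‖R⁻¹ • z‖ = ‖z‖ / R := fun z => by
    rw [norm_smul, norm_inv, Real.norm_eq_abs, abs_of_pos hR]; field_simp
  have h1 : ∀ z : ℂ, ‖z‖ ≤ R → f (R⁻¹ • z) = 1 := fun z hz =>
    f.one_of_mem_closedBall (by
      rw [mem_closedBall, dist_zero_right, hn, div_le_one hR]; exact hz)
  have h0 : ∀ z : ℂ, 2 * R < ‖z‖ → f (R⁻¹ • z) = 0 := fun z hz =>
    f.zero_of_le_dist (by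
      rw [dist_zero_right, hn, le_div_iff₀ hR]; exact hz.le)
  refine ⟨fun z => f (R⁻¹ • z), hf.comp (by fun_prop),
    f.hasCompactSupport.comp_smul hRi, h1, fun z hz => ?_, fun z hz => ?_, fun z => ?_⟩
  · have : (fun z : ℂ => f (R⁻¹ • z)) =ᶠ[𝓝 z] fun _ => (1 : ℝ) := by
      filter_upwards [(isOpen_lt continuous_norm continuous_const).mem_nhds hz] with w hw
      exact h1 w (le_of_lt hw)
    rw [this.fderiv_eq]; simp
  · have : (fun z : ℂ => f (R⁻¹ • z)) =ᶠ[𝓝 z] fun _ => (0 : ℝ) := by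
      filter_upwards [(isOpen_lt continuous_const continuous_norm).mem_nhds hz] with w hw
      exact h0 w hw
    rw [this.fderiv_eq]; simp
  · have : fderiv ℝ (fun z : ℂ => f (R⁻¹ • z)) z = R⁻¹ • fderiv ℝ f (R⁻¹ • z) :=
      fderiv_comp_smul (f := f) R⁻¹
    rw [this, norm_smul, norm_inv, Real.norm_eq_abs, abs_of_pos hR, inv_mul_eq_div]
    gcongr
    exact (hA _).trans (le_max_left _ _)

namespace C1Roof

variable {Ω : Set ℂ} {u : ℂ → ℝ} {G : ℂ → (ℂ →L[ℝ] ℝ)}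

/-- With `F = r · 2∂u/∂z`, the layer term of the integration by parts is the layer integral
of `χ r`, because `|2∂u/∂z|² = |∇u|²`. -/
lemma integral_layer_eq (H : C1Roof Ω u G) (hGu : ∀ z ∈ Ω, G z = fderiv ℝ u z)
    {h : ℝ} (hh : 0 < h) {η k : ℝ → ℝ} (hk : Cut h η k)
    (hp : DifferentiableOn ℂ (holGrad u) Ω) {r g : ℂ → ℂ} (hr : DifferentiableOn ℂ r Ω)
    {χ : ℂ → ℝ} (hχ : ContDiff ℝ 1 χ) (hχc : HasCompactSupport χ)
    (hg : ∀ z ∈ Ω, g z = χ z * r z) :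
    ∫ z, layer Ω u G k g z = -∫ z, Ω.indicator (fun z => (η (u z) : ℂ) *
        ((fderiv ℝ χ z 1 : ℂ) + Complex.I * (fderiv ℝ χ z Complex.I : ℂ)) *
          (r z * holGrad u z)) z := by
  have hb := H.integral_by_parts hh hk (F := fun z => r z * holGrad u z) (hr.mul hp) hχ hχc
  rw [← hb]
  refine integral_congr_ae (Eventually.of_forall fun z => ?_)
  by_cases hz : z ∈ Ω
  · simp only [layer, indicator_of_mem hz]
    rw [hg z hz, norm_sq_clm, holGrad, ← hGu z hz]
    push_cast
    linear_combination (χ z : ℂ) * r z * k (u z) * (G z Complex.I : ℂ) ^ 2 * Complex.I_sq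
  · simp [layer, hz]

/-- The boundary term at infinity: on the annulus `R ≤ |z| ≤ 2R`, of area `O(R²)`, the gradients
of the cutoff and of `u` are both `O(1 / R)` and `r` is at most `δ`. -/
lemma norm_integral_far_le {η : ℝ → ℝ} (hη : ∀ t, η t ∈ Icc (0 : ℝ) 1) {r : ℂ → ℂ} {χ : ℂ → ℝ}
    {A M R δ : ℝ} (hR : 0 < R) (hA : 0 ≤ A) (hM : 0 ≤ M)
    (hχ1 : ∀ z, ‖z‖ < R → fderiv ℝ χ z = 0) (hχ2 : ∀ z, 2 * R < ‖z‖ → fderiv ℝ χ z = 0)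
    (hχA : ∀ z, ‖fderiv ℝ χ z‖ ≤ A / R) (hδ : ∀ z, R ≤ ‖z‖ → ‖r z‖ ≤ δ) (hδ0 : 0 ≤ δ)
    (hp : ∀ z, R ≤ ‖z‖ → ‖holGrad u z‖ ≤ M / ‖z‖) :
    ‖∫ z, Ω.indicator (fun z => (η (u z) : ℂ) *
        ((fderiv ℝ χ z 1 : ℂ) + Complex.I * (fderiv ℝ χ z Complex.I : ℂ)) *
          (r z * holGrad u z)) z‖ ≤ 8 * Real.pi * A * M * δ := by
  set f : ℂ → ℂ := Ω.indicator (fun z => (η (u z) : ℂ) *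
        ((fderiv ℝ χ z 1 : ℂ) + Complex.I * (fderiv ℝ χ z Complex.I : ℂ)) *
          (r z * holGrad u z)) with hf
  have hout : ∀ z ∉ closedBall (0 : ℂ) (2 * R), f z = 0 := by
    intro z hz
    have : fderiv ℝ χ z = 0 := hχ2 z (by simpa using hz)
    by_cases hzΩ : z ∈ Ω <;> simp [hf, hzΩ, this]
  have hle : ∀ z, ‖f z‖ ≤ 2 * (A / R) * (δ * (M / R)) := by
    intro z
    have hnn : 0 ≤ 2 * (A / R) * (δ * (M / R)) := by positivity
    by_cases hzΩ : z ∈ Ω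
    swap
    · simp only [hf, indicator_of_notMem hzΩ, norm_zero]; exact hnn
    rcases lt_or_ge ‖z‖ R with hzR | hzR
    · have : fderiv ℝ χ z = 0 := hχ1 z hzR
      simp only [hf, indicator_of_mem hzΩ, this]
      simpa using hnn
    · simp only [hf, indicator_of_mem hzΩ, norm_mul]
      have e1 : ‖(η (u z) : ℂ)‖ ≤ 1 := by
        rw [Complex.norm_real, Real.norm_eq_abs, abs_of_nonneg (hη _).1]; exact (hη _).2
      have e2 : ‖(fderiv ℝ χ z 1 : ℂ) + Complex.I * (fderiv ℝ χ z Complex.I : ℂ)‖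
          ≤ 2 * (A / R) := by
        refine (norm_add_le _ _).trans ?_
        rw [norm_mul, Complex.norm_I, one_mul, Complex.norm_real, Complex.norm_real]
        have h1 := (fderiv ℝ χ z).le_opNorm 1
        have h2 := (fderiv ℝ χ z).le_opNorm Complex.I
        rw [norm_one, mul_one] at h1
        rw [Complex.norm_I, mul_one] at h2
        linarith [hχA z]
      have e3 : ‖holGrad u z‖ ≤ M / R := (hp z hzR).trans (by gcongr)
      have e4 := hδ z hzR
      calc _ ≤ 1 * (2 * (A / R)) * (δ * (M / R)) := by gcongr
        _ = _ := by ring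
  have hvol : (volume : Measure ℂ).real (closedBall (0 : ℂ) (2 * R)) = Real.pi * (2 * R) ^ 2 := by
    rw [Measure.real, Complex.volume_closedBall, ENNReal.toReal_mul, ENNReal.toReal_pow,
      ENNReal.toReal_ofReal (by positivity)]
    simp [mul_comm]
  rw [← setIntegral_eq_integral_of_forall_compl_eq_zero hout]
  refine (norm_setIntegral_le_of_norm_le_const (isCompact_closedBall _ _).measure_lt_top
    fun z _ => hle z).trans (le_of_eq ?_)
  rw [hvol]
  field_simp
  ring

end C1Roof

/-! ### The quadrature identity -/

namespace C1Roof

variable {Ω : Set ℂ} {u : ℂ → ℝ} {G : ℂ → (ℂ →L[ℝ] ℝ)}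

/-- The quadrature identity, for a roof function together with its continuous extension of the
differential. -/
lemma integral_frontier_eq_zero (H : C1Roof Ω u G) (hGu : ∀ z ∈ Ω, G z = fderiv ℝ u z)
    (hG : ∀ z ∈ frontier Ω, ‖G z‖ = 1) (hu : HarmonicOnC u Ω) (hK : IsCompact Ωᶜ)
    {r : ℂ → ℂ} (hrc : ContinuousOn r (closure Ω)) (hr : DifferentiableOn ℂ r Ω)
    (hr0 : Tendsto r (cocompact ℂ) (𝓝 0)) :
    ∫ z in frontier Ω, r z ∂μH[1] = 0 := by
  have hfK : frontier Ω ⊆ Ωᶜ := by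
    rw [← frontier_compl]; exact H.isOpen.isClosed_compl.frontier_subset
  have hfc : IsCompact (frontier Ω) := hK.of_isClosed_subset isClosed_frontier hfK
  obtain ⟨R₀, hR₀, hKR⟩ := hK.isBounded.subset_closedBall_lt 0 0
  have hΩR : ∀ z, R₀ < ‖z‖ → z ∈ Ω := by
    intro z hz
    by_contra hzΩ
    have := hKR hzΩ
    rw [mem_closedBall, dist_zero_right] at this
    linarith
  have hh := harmonicOnNhd_of_harmonicOnC H.isOpen hu
  have hp : DifferentiableOn ℂ (holGrad u) Ω := fun z hz =>
    (HarmonicAt.differentiableAt_complex_partial (hh z hz)).differentiableWithinAt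
  obtain ⟨M, R₁, hM, hMb⟩ := HarmonicExterior.exists_decay hR₀ (fun z hz => hh z (hΩR z hz))
    fun z hz => H.pos z (hΩR z hz)
  obtain ⟨A, hA, hAb⟩ := exists_cutoff
  -- a global continuous function agreeing with `r` on the closure
  obtain ⟨r', hr'⟩ := ContinuousMap.exists_restrict_eq isClosed_closure
    (⟨_, hrc.domRestrict⟩ : C(closure Ω, ℂ))
  have hrr : ∀ z ∈ closure Ω, r' z = r z := fun z hz => congrArg (fun f => f ⟨z, hz⟩) hr'
  have key : ∀ δ > 0, ‖∫ z in frontier Ω, r z ∂μH[1]‖ ≤ (8 * Real.pi * A * M + 1) * δ := by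
    intro δ hδ
    have h1 : ∀ᶠ z in cocompact ℂ, ‖r z‖ < δ := by
      have := hr0.norm
      rw [norm_zero] at this
      exact this.eventually (gt_mem_nhds hδ)
    obtain ⟨R₂, hR₂⟩ := closedBall_compl_subset_of_mem_cocompact h1 (0 : ℂ)
    have hrδ : ∀ z, R₂ < ‖z‖ → ‖r z‖ ≤ δ := fun z hz =>
      le_of_lt (hR₂ (by simpa using hz))
    obtain ⟨R, hR⟩ := exists_gt (max R₀ (max R₁ R₂))
    obtain ⟨hR0', hR'⟩ := max_lt_iff.1 hR
    obtain ⟨hR1', hR2'⟩ := max_lt_iff.1 hR'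
    have hRpos : 0 < R := hR₀.trans hR0'
    obtain ⟨χ, hχ, hχc, hχ1, hχz, hχf, hχA⟩ := hAb R hRpos
    have hgc : Continuous fun z => (χ z : ℂ) * r' z :=
      (Complex.continuous_ofReal.comp hχ.continuous).mul r'.continuous
    have hgs : HasCompactSupport fun z => (χ z : ℂ) * r' z :=
      (hχc.comp_left (g := fun x : ℝ => (x : ℂ)) Complex.ofReal_zero).mul_right
    obtain ⟨h, hlay, hh0⟩ :=
      ((H.layer_tendsto hfc hG hgc hgs hδ).and self_mem_nhdsWithin).exists
    have hh0 : 0 < h := hh0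
    obtain ⟨η, k, hk⟩ := exists_cut hh0
    have hl := hlay η k hk
    rw [H.integral_layer_eq hGu hh0 hk hp hr hχ hχc
      (fun z hz => by rw [hrr z (subset_closure hz)])] at hl
    have hfar := norm_integral_far_le (Ω := Ω) (u := u) hk.mem hRpos hA.le hM.le hχz hχf hχA
      (fun z hz => hrδ z (hR2'.trans_le hz)) hδ.le fun z hz => hMb z (hR1'.trans_le hz)
    -- the cutoff is `1` on the frontier
    have heq : ∫ z in frontier Ω, (χ z : ℂ) * r' z ∂μH[1] = ∫ z in frontier Ω, r z ∂μH[1] := by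
      refine setIntegral_congr_fun isClosed_frontier.measurableSet fun z hz => ?_
      have hz1 : ‖z‖ ≤ R := by
        have := hKR (hfK hz)
        rw [mem_closedBall, dist_zero_right] at this
        linarith
      simp only [hχ1 z hz1, hrr z (frontier_subset_closure hz), Complex.ofReal_one, one_mul]
    rw [heq, norm_sub_rev] at hl
    have htri := norm_le_norm_add_norm_sub' (∫ z in frontier Ω, r z ∂μH[1])
      (-∫ z, Ω.indicator (fun z => (η (u z) : ℂ) *
        ((fderiv ℝ χ z 1 : ℂ) + Complex.I * (fderiv ℝ χ z Complex.I : ℂ)) *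
          (r z * holGrad u z)) z)
    rw [norm_neg] at htri
    linarith
  by_contra hne
  have hI : 0 < ‖∫ z in frontier Ω, r z ∂μH[1]‖ := norm_pos_iff.2 hne
  have hB : 0 < 8 * Real.pi * A * M + 1 := by positivity
  have := key (‖∫ z in frontier Ω, r z ∂μH[1]‖ / (2 * (8 * Real.pi * A * M + 1))) (by positivity)
  have e : ∀ x B : ℝ, 0 < B → B * (x / (2 * B)) = x / 2 := fun x B hB => by field_simp
  rw [e _ _ hB] at this
  linarith

end C1Roof

end

/-- The arclength null quadrature property of exceptional domains: if `Ω` is an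
exceptional domain with compact complement and `r` is holomorphic on a neighbourhood of
`closure Ω` with `r(z) → 0` as `|z| → ∞`, then `∂Ω` has finite length and
`∫_{∂Ω} r dℋ¹ = 0`. -/
theorem exceptional_domain_arclength_null_quadrature
    (Ω : Set ℂ) (hΩo : IsOpen Ω) (hΩconn : IsConnected Ω)
    (hKne : (Ωᶜ : Set ℂ).Nonempty) (hKcp : IsCompact (Ωᶜ : Set ℂ))
    (u : ℂ → ℝ) (hu : IsRoofFunctionC Ω u)
    (V : Set ℂ) (hVo : IsOpen V) (hV : closure Ω ⊆ V)
    (r : ℂ → ℂ) (hr : DifferentiableOn ℂ r V)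
    (hr0 : Filter.Tendsto r (Filter.cocompact ℂ) (nhds 0)) :
    μH[1] (frontier Ω) < ⊤ ∧
    IntegrableOn r (frontier Ω) μH[1] ∧
    ∫ z in frontier Ω, r z ∂μH[1] = 0 := by
  obtain ⟨huc, huh, hpos, hzero, G, hGc, hGu, hG⟩ := hu
  have H : C1Roof Ω u G :=
    { isOpen := hΩo
      cont := huc
      contG := hGc
      hasFDeriv := fun z hz => by
        rw [hGu z hz]
        exact ((huh.1 z hz).differentiableAt two_ne_zero).hasFDerivAt
      pos := hpos
      zero := hzero }
  have hfc : IsCompact (frontier Ω) := hKcp.of_isClosed_subset isClosed_frontier (by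
    rw [← frontier_compl]; exact hΩo.isClosed_compl.frontier_subset)
  have hrc : ContinuousOn r (closure Ω) := hr.continuousOn.mono hV
  have hfin := H.measure_frontier_lt_top hfc hG
  exact ⟨hfin, C1Roof.integrableOn_frontier hfc hfin (hrc.mono frontier_subset_closure),
    H.integral_frontier_eq_zero hGu hG huh hKcp hrc
      (hr.mono (subset_closure.trans hV)) hr0⟩
end

section
/- The entire function g(w) = w + sinh(w) is injective on the closed strip {w ∈ ℂ : |Im w| ≤ π/2}; moreover g′(w) = 1 + cosh(w) does not vanish on this closed strip, so g maps the open strip {w ∈ ℂ : |Im w| < π/2} biholomorphically onto an open subset of ℂ. -/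
open Set

/-!
On the closed strip `|Im w| ≤ π/2` one has `Re (1 + cosh w) = 1 + cosh (Re w) cos (Im w) ≥ 1`, so
the derivative of `w + sinh w` lies in the right half-plane (`one_le_re_one_add_cosh`). The strip
is convex, so injectivity follows by the Noshiro–Warschawski argument: for `a ≠ b` in the strip the
real function `t ↦ Re (conj (b - a) * g (a + t (b - a)))` has derivative
`|b - a|² Re g' (a + t (b - a)) > 0` on `[0, 1]`, hence `g a ≠ g b`. This is
`injOn_of_re_deriv_pos`. Openness of the image is the inverse function theorem.
-/

lemma one_le_re_one_add_cosh {w : ℂ} (hw : |w.im| ≤ Real.pi / 2) :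
    1 ≤ (1 + Complex.cosh w).re := by
  have hcos : 0 ≤ Real.cos w.im := Real.cos_nonneg_of_mem_Icc (abs_le.mp hw)
  have hre : (Complex.cosh w).re = Real.cosh w.re * Real.cos w.im := by
    conv_lhs => rw [← Complex.re_add_im w]
    rw [Complex.cosh_add, Complex.cosh_mul_I, Complex.sinh_mul_I, ← Complex.ofReal_cosh,
      ← Complex.ofReal_sinh, ← Complex.ofReal_cos, ← Complex.ofReal_sin]
    simp [-Complex.ofReal_cos, -Complex.ofReal_sin, -Complex.ofReal_cosh, -Complex.ofReal_sinh]
  have := mul_nonneg (Real.cosh_pos w.re).le hcos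
  rw [Complex.add_re, Complex.one_re, hre]
  linarith

/-- The Noshiro–Warschawski criterion, in a form that allows a convex set which need not be
open. -/
lemma injOn_of_re_deriv_pos {s : Set ℂ} (hs : Convex ℝ s) {f f' : ℂ → ℂ}
    (hf : ∀ w ∈ s, HasDerivAt f (f' w) w) (hpos : ∀ w ∈ s, 0 < (f' w).re) : InjOn f s := by
  intro a ha b hb hab
  by_contra hne
  have hmem : ∀ t ∈ Icc (0 : ℝ) 1, a + (t : ℂ) * (b - a) ∈ s := fun t ht => by
    simpa using hs.add_smul_sub_mem ha hb ht
  have hderiv : ∀ t ∈ Icc (0 : ℝ) 1,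
      HasDerivAt (fun t : ℝ => (starRingEnd ℂ (b - a) * f (a + (t : ℂ) * (b - a))).re)
        (Complex.normSq (b - a) * (f' (a + (t : ℂ) * (b - a))).re) t := by
    intro t ht
    have hline : HasDerivAt (fun z : ℂ => a + z * (b - a)) (b - a) (t : ℂ) := by
      simpa using ((hasDerivAt_id (t : ℂ)).mul_const (b - a)).const_add a
    have h := (((hf _ (hmem t ht)).comp (t : ℂ) hline).const_mul
      (starRingEnd ℂ (b - a))).real_of_complex
    have key : starRingEnd ℂ (b - a) * (f' (a + (t : ℂ) * (b - a)) * (b - a))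
        = (Complex.normSq (b - a) : ℂ) * f' (a + (t : ℂ) * (b - a)) := by
      rw [Complex.normSq_eq_conj_mul_self]; ring
    rw [key, Complex.re_ofReal_mul] at h
    exact h
  have hmono := strictMonoOn_of_deriv_pos (convex_Icc (0 : ℝ) 1)
    (fun t ht => (hderiv t ht).continuousAt.continuousWithinAt) (fun t ht => by
      have ht' := interior_subset ht
      rw [(hderiv t ht').deriv]
      exact mul_pos (Complex.normSq_pos.mpr (sub_ne_zero.mpr (Ne.symm hne)))
        (hpos _ (hmem t ht')))
  have hlt := hmono (left_mem_Icc.mpr zero_le_one) (right_mem_Icc.mpr zero_le_one) zero_lt_one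
  simp [hab] at hlt

/-- The map `g(w) = w + sinh w` is injective on the closed strip `|Im w| ≤ π/2`, its
derivative `1 + cosh w` does not vanish there, and it maps the open strip
`|Im w| < π/2` onto an open subset of `ℂ` (hence biholomorphically onto its image). -/
theorem sinh_strip_map_univalent :
    InjOn (fun w : ℂ => w + Complex.sinh w) {w : ℂ | |w.im| ≤ Real.pi / 2} ∧
    (∀ w : ℂ, |w.im| ≤ Real.pi / 2 →
      deriv (fun w : ℂ => w + Complex.sinh w) w = 1 + Complex.cosh w ∧
      1 + Complex.cosh w ≠ 0) ∧
    IsOpen ((fun w : ℂ => w + Complex.sinh w) '' {w : ℂ | |w.im| < Real.pi / 2}) := by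
  have hd : ∀ w : ℂ, HasStrictDerivAt (fun w : ℂ => w + Complex.sinh w) (1 + Complex.cosh w) w :=
    fun w => (hasStrictDerivAt_id w).add (Complex.hasStrictDerivAt_sinh w)
  have hne : ∀ w : ℂ, |w.im| ≤ Real.pi / 2 → 1 + Complex.cosh w ≠ 0 := fun w hw h0 => by
    have := one_le_re_one_add_cosh hw
    rw [h0, Complex.zero_re] at this
    linarith
  refine ⟨?_, fun w hw => ⟨(hd w).hasDerivAt.deriv, hne w hw⟩, ?_⟩
  · have hconv : Convex ℝ {w : ℂ | |w.im| ≤ Real.pi / 2} := by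
      have : {w : ℂ | |w.im| ≤ Real.pi / 2}
          = Complex.imLm ⁻¹' Icc (-(Real.pi / 2)) (Real.pi / 2) := by
        ext w; simp [abs_le]
      rw [this]
      exact (convex_Icc _ _).linear_preimage _
    exact injOn_of_re_deriv_pos hconv (fun w _ => (hd w).hasDerivAt)
      fun w hw => zero_lt_one.trans_le (one_le_re_one_add_cosh hw)
  · have hopen : IsOpen {w : ℂ | |w.im| < Real.pi / 2} :=
      isOpen_lt Complex.continuous_im.abs continuous_const
    rw [isOpen_iff_mem_nhds]
    rintro _ ⟨w, hw, rfl⟩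
    rw [← (hd w).map_nhds_eq (hne w (le_of_lt hw))]
    exact Filter.image_mem_map (hopen.mem_nhds hw)
end

section
/- Let Σ = {w ∈ ℂ : |Im w| < π/2}, let g(w) = w + sinh(w), and let Ω = g(Σ). Define u : Ω → ℝ by u(g(w)) = Re(cosh w) for w ∈ Σ (well-defined since g is injective on Σ). Then Ω is an exceptional domain with classical roof function u: Ω is open and connected with ∂Ω = g({w : |Im w| = π/2}); u is harmonic and strictly positive on Ω; u extends continuously to the closure of Ω with u = 0 at every point of ∂Ω; and the (continuously extended) gradient of u has Euclidean norm 1 at every point of ∂Ω. -/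
/-!
On the closed strip `|Im w| ≤ π/2` one has `Re (cosh w) = cosh (Re w) cos (Im w) ≥ 0`, so
`g w = w + sinh w` satisfies `Re (g' w) = 1 + Re (cosh w) ≥ 1`. Since the strip is convex,
integrating along segments shows that `g` is distance-expanding there (`dist_le_dist_g`). Hence `g`
is injective on the closed strip, the image of the closed strip is closed (`isClosed_image_g`), and
the inverse `hInv` is 1-Lipschitz. As `g' ≠ 0`, the image of the open strip is open, so its closure
is the image of the closed strip and, by injectivity, its frontier is the image of the two boundary
lines.

The roof function is `u = Re F` with `F = cosh ∘ hInv`. It is harmonic because `F` is holomorphic,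
and its differential is `v ↦ Re (F' v)` with `F' (g w) = sinh w / (1 + cosh w)`. The latter is
continuous up to the boundary because `1 + cosh w` does not vanish on the closed strip. On
`|Im w| = π/2`, where `cos (Im w) = 0`, both `‖sinh w‖²` and `‖1 + cosh w‖²` equal `cosh² (Re w)`,
so `‖F'‖ = 1`.
-/

open Metric Set

namespace HHP

open Filter Topology

/-- The map `w ↦ w + sinh w`. -/
noncomputable def g (w : ℂ) : ℂ := w + Complex.sinh w

/-- The open strip `|Im w| < π/2`. -/
def S : Set ℂ := {w : ℂ | |w.im| < Real.pi / 2}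

/-- The closed strip `|Im w| ≤ π/2`. -/
def C : Set ℂ := {w : ℂ | |w.im| ≤ Real.pi / 2}

/-- The inverse of `g` on the closed strip (arbitrary off the image of the closed strip). -/
noncomputable def hInv : ℂ → ℂ := Function.invFunOn g C

/-- The complex derivative of `cosh ∘ hInv` on the image of `S` under `g`, given by a formula that
extends it continuously to the image of `C`. -/
noncomputable def dF (z : ℂ) : ℂ := Complex.sinh (hInv z) / (1 + Complex.cosh (hInv z))

/-- The real-linear functional `v ↦ Re (c v)`. -/
noncomputable def reMul (c : ℂ) : ℂ →L[ℝ] ℝ := Complex.reCLM.comp (c • (1 : ℂ →L[ℝ] ℂ))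

lemma reMul_apply (c v : ℂ) : reMul c v = (c * v).re := by
  simp [reMul]

lemma continuous_reMul : Continuous reMul := by
  unfold reMul
  fun_prop

lemma norm_reMul {c : ℂ} (hc : ‖c‖ = 1) : ‖reMul c‖ = 1 := by
  apply le_antisymm
  · refine ContinuousLinearMap.opNorm_le_bound _ zero_le_one fun v => ?_
    rw [reMul_apply, Real.norm_eq_abs]
    refine (Complex.abs_re_le_norm _).trans ?_
    simp [hc]
  · -- the norm is attained at the conjugate of `c`
    have h := (reMul c).le_opNorm ((starRingEnd ℂ) c)
    rw [reMul_apply, Complex.mul_conj, Complex.normSq_eq_norm_sq, hc] at h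
    simpa [hc] using h

/-! ### Hyperbolic functions on the strip -/

lemma cosh_re (w : ℂ) : (Complex.cosh w).re = Real.cosh w.re * Real.cos w.im := by
  rw [← Complex.re_add_im w, Complex.cosh_add, Complex.cosh_mul_I, Complex.sinh_mul_I]
  simp [← Complex.ofReal_cosh, ← Complex.ofReal_sinh, ← Complex.ofReal_cos,
    ← Complex.ofReal_sin]

lemma cosh_im (w : ℂ) : (Complex.cosh w).im = Real.sinh w.re * Real.sin w.im := by
  rw [← Complex.re_add_im w, Complex.cosh_add, Complex.cosh_mul_I, Complex.sinh_mul_I]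
  simp [← Complex.ofReal_cosh, ← Complex.ofReal_sinh, ← Complex.ofReal_cos,
    ← Complex.ofReal_sin]

lemma sinh_re (w : ℂ) : (Complex.sinh w).re = Real.sinh w.re * Real.cos w.im := by
  rw [← Complex.re_add_im w, Complex.sinh_add, Complex.cosh_mul_I, Complex.sinh_mul_I]
  simp [← Complex.ofReal_cosh, ← Complex.ofReal_sinh, ← Complex.ofReal_cos,
    ← Complex.ofReal_sin]

lemma sinh_im (w : ℂ) : (Complex.sinh w).im = Real.cosh w.re * Real.sin w.im := by
  rw [← Complex.re_add_im w, Complex.sinh_add, Complex.cosh_mul_I, Complex.sinh_mul_I]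
  simp [← Complex.ofReal_cosh, ← Complex.ofReal_sinh, ← Complex.ofReal_cos,
    ← Complex.ofReal_sin]

lemma cosh_re_nonneg {w : ℂ} (hw : w ∈ C) : 0 ≤ (Complex.cosh w).re := by
  rw [cosh_re]
  have h := abs_le.1 (show |w.im| ≤ Real.pi / 2 from hw)
  exact mul_nonneg (Real.cosh_pos _).le (Real.cos_nonneg_of_mem_Icc ⟨by linarith [h.1], h.2⟩)

lemma cosh_re_pos {w : ℂ} (hw : w ∈ S) : 0 < (Complex.cosh w).re := by
  rw [cosh_re]
  have h := abs_lt.1 (show |w.im| < Real.pi / 2 from hw)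
  exact mul_pos (Real.cosh_pos _) (Real.cos_pos_of_mem_Ioo ⟨by linarith [h.1], h.2⟩)

lemma cos_im_eq_zero {w : ℂ} (hw : |w.im| = Real.pi / 2) : Real.cos w.im = 0 := by
  rw [← Real.cos_abs, hw, Real.cos_pi_div_two]

lemma one_add_cosh_ne_zero {w : ℂ} (hw : w ∈ C) : 1 + Complex.cosh w ≠ 0 := by
  intro h
  have h1 := congrArg Complex.re h
  have h2 := cosh_re_nonneg hw
  simp only [Complex.add_re, Complex.one_re, Complex.zero_re] at h1
  linarith

lemma norm_sinh_div {w : ℂ} (hw : |w.im| = Real.pi / 2) :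
    ‖Complex.sinh w / (1 + Complex.cosh w)‖ = 1 := by
  have h0 := cos_im_eq_zero hw
  have hne : 1 + Complex.cosh w ≠ 0 := one_add_cosh_ne_zero (w := w) hw.le
  rw [norm_div, div_eq_one_iff_eq (norm_ne_zero_iff.2 hne),
    ← sq_eq_sq₀ (norm_nonneg _) (norm_nonneg _), ← Complex.normSq_eq_norm_sq,
    ← Complex.normSq_eq_norm_sq, Complex.normSq_apply, Complex.normSq_apply]
  have h1 := Real.sin_sq_add_cos_sq w.im
  have h2 := Real.cosh_sq w.re
  rw [h0] at h1
  simp only [Complex.add_re, Complex.add_im, Complex.one_re, Complex.one_im, sinh_re, sinh_im,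
    cosh_re, cosh_im, h0]
  linear_combination (Real.sin w.im) ^ 2 * h2 + h1

lemma S_subset_C : S ⊆ C := fun w hw => (show |w.im| < Real.pi / 2 from hw).le

lemma isOpen_S : IsOpen S :=
  isOpen_lt (by fun_prop) continuous_const

lemma isClosed_C : IsClosed C :=
  isClosed_le (by fun_prop) continuous_const

lemma S_eq : S = Complex.im ⁻¹' Ioo (-(Real.pi / 2)) (Real.pi / 2) := by
  ext w
  simp [S, abs_lt]

lemma C_eq : C = Complex.im ⁻¹' Icc (-(Real.pi / 2)) (Real.pi / 2) := by
  ext w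
  simp [C, abs_le]

lemma closure_S : closure S = C := by
  have := Real.pi_pos
  rw [S_eq, C_eq, Complex.closure_preimage_im, closure_Ioo (by linarith)]

lemma convex_S : Convex ℝ S := by
  rw [S_eq]
  exact (convex_Ioo _ _).linear_preimage Complex.imLm

lemma convex_C : Convex ℝ C := by
  rw [C_eq]
  exact (convex_Icc _ _).linear_preimage Complex.imLm

/-! ### Mapping properties of `g` -/

lemma hasStrictDerivAt_g (w : ℂ) : HasStrictDerivAt g (1 + Complex.cosh w) w :=
  (hasStrictDerivAt_id w).add (Complex.hasStrictDerivAt_sinh w)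

lemma continuous_g : Continuous g := by
  unfold g
  fun_prop

/-- Monotonicity of `sinh` on the closed strip, in the sense of monotone operators: along the
segment from `b` to `a`, the derivative of `t ↦ Re (conj (a - b) * sinh)` is
`‖a - b‖² * Re cosh ≥ 0`. -/
lemma sinh_monotone {a b : ℂ} (ha : a ∈ C) (hb : b ∈ C) :
    0 ≤ ((starRingEnd ℂ) (a - b) * (Complex.sinh a - Complex.sinh b)).re := by
  set d := a - b with hd
  let f : ℝ → ℝ := fun t => ((starRingEnd ℂ) d * Complex.sinh (b + t * d)).re
  have hf : ∀ t : ℝ, HasDerivAt f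
      ((starRingEnd ℂ) d * (Complex.cosh (b + t * d) * d)).re t := by
    intro t
    have h1 : HasDerivAt (fun t : ℝ => b + (t : ℂ) * d) d t := by
      simpa using (((hasDerivAt_id t).ofReal_comp).mul_const d).const_add b
    have h2 := ((Complex.hasDerivAt_sinh (b + t * d)).comp t h1).const_mul ((starRingEnd ℂ) d)
    exact Complex.reCLM.hasFDerivAt.comp_hasDerivAt t h2
  have hmono : MonotoneOn f (Icc 0 1) := by
    refine monotoneOn_of_deriv_nonneg (convex_Icc _ _)
      (fun t _ => (hf t).continuousAt.continuousWithinAt)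
      (fun t _ => (hf t).differentiableAt.differentiableWithinAt) ?_
    intro t ht
    rw [interior_Icc] at ht
    have hmem : b + t * d ∈ C := by
      have := convex_C hb ha (sub_nonneg.2 ht.2.le) ht.1.le (by ring)
      convert this using 1
      simp only [Complex.real_smul, Complex.ofReal_sub, Complex.ofReal_one, hd]
      ring
    rw [(hf t).deriv]
    have h3 : (starRingEnd ℂ) d * (Complex.cosh (b + t * d) * d) =
        ((Complex.normSq d : ℝ) : ℂ) * Complex.cosh (b + t * d) := by
      rw [← Complex.mul_conj]; ring
    rw [h3, Complex.re_ofReal_mul]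
    exact mul_nonneg (Complex.normSq_nonneg _) (cosh_re_nonneg hmem)
  have h := hmono (left_mem_Icc.2 zero_le_one) (right_mem_Icc.2 zero_le_one) zero_le_one
  have e0 : f 0 = ((starRingEnd ℂ) d * Complex.sinh b).re := by simp [f]
  have e1 : f 1 = ((starRingEnd ℂ) d * Complex.sinh a).re := by simp [f, hd]
  rw [mul_sub, Complex.sub_re, ← e0, ← e1]
  linarith

lemma dist_le_dist_g {a b : ℂ} (ha : a ∈ C) (hb : b ∈ C) : dist a b ≤ dist (g a) (g b) := by
  rw [dist_eq_norm, dist_eq_norm]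
  have h1 : ‖a - b‖ ^ 2 ≤ ((starRingEnd ℂ) (a - b) * (g a - g b)).re := by
    have h2 : (starRingEnd ℂ) (a - b) * (g a - g b) = ((Complex.normSq (a - b) : ℝ) : ℂ) +
        (starRingEnd ℂ) (a - b) * (Complex.sinh a - Complex.sinh b) := by
      rw [← Complex.mul_conj]; simp only [g]; ring
    rw [h2, Complex.add_re, Complex.ofReal_re, Complex.normSq_eq_norm_sq]
    linarith [sinh_monotone ha hb]
  have h3 := (h1.trans (Complex.re_le_norm _))
  rw [norm_mul, RCLike.norm_conj] at h3
  rcases (norm_nonneg (a - b)).eq_or_lt with h0 | h0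
  · rw [← h0]; exact norm_nonneg _
  · exact le_of_mul_le_mul_left (by linarith [sq ‖a - b‖]) h0

lemma injOn_g : InjOn g C := fun a ha b hb hab =>
  dist_le_zero.1 ((dist_le_dist_g ha hb).trans_eq (by rw [hab, dist_self]))

lemma isClosed_image_g : IsClosed (g '' C) := by
  refine isClosed_of_closure_subset fun z hz => ?_
  obtain ⟨x, hx, hxz⟩ := mem_closure_iff_seq_limit.1 hz
  choose w hwC hw using hx
  have hc : CauchySeq w := by
    refine Metric.cauchySeq_iff.2 fun ε hε => ?_
    obtain ⟨N, hN⟩ := Metric.cauchySeq_iff.1 hxz.cauchySeq ε hε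
    refine ⟨N, fun m hm n hn => (dist_le_dist_g (hwC m) (hwC n)).trans_lt ?_⟩
    rw [hw, hw]
    exact hN m hm n hn
  obtain ⟨l, hl⟩ := cauchySeq_tendsto_of_complete hc
  refine ⟨l, isClosed_C.mem_of_tendsto hl (Eventually.of_forall hwC), ?_⟩
  refine tendsto_nhds_unique ((continuous_g.tendsto l).comp hl) ?_
  simpa only [Function.comp_def, hw] using hxz

lemma closure_image_g : closure (g '' S) = g '' C := by
  apply Subset.antisymm
  · exact closure_minimal (image_mono S_subset_C) isClosed_image_g
  · rw [← closure_S]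
    exact image_closure_subset_closure_image continuous_g

lemma isOpen_image_g : IsOpen (g '' S) := by
  rw [isOpen_iff_mem_nhds]
  rintro _ ⟨w, hw, rfl⟩
  rw [← (hasStrictDerivAt_g w).map_nhds_eq (one_add_cosh_ne_zero (S_subset_C hw))]
  exact image_mem_map (isOpen_S.mem_nhds hw)

lemma frontier_image_g : frontier (g '' S) = g '' {w : ℂ | |w.im| = Real.pi / 2} := by
  rw [frontier, isOpen_image_g.interior_eq, closure_image_g, ← injOn_g.image_sdiff_subset S_subset_C]
  congr 1
  ext w
  simp only [S, C, Set.mem_sdiff, mem_ofPred_eq, not_lt]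
  exact ⟨fun h => le_antisymm h.1 h.2, fun h => ⟨h.le, h.ge⟩⟩

lemma hInv_g {w : ℂ} (hw : w ∈ C) : hInv (g w) = w :=
  injOn_g.leftInvOn_invFunOn hw

lemma continuousOn_hInv : ContinuousOn hInv (g '' C) := by
  refine LipschitzOnWith.continuousOn (K := 1) (LipschitzOnWith.of_dist_le_mul ?_)
  rintro _ ⟨a, ha, rfl⟩ _ ⟨b, hb, rfl⟩
  rw [hInv_g ha, hInv_g hb]
  simpa using dist_le_dist_g ha hb

/-! ### The roof function -/

/-- The chain rule: `(cosh ∘ hInv)' = sinh / g'`, evaluated at `hInv z`. -/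
lemma hasDerivAt_F {z : ℂ} (hz : z ∈ g '' S) :
    HasDerivAt (fun z => Complex.cosh (hInv z)) (dF z) z := by
  have hev : ∀ᶠ y in 𝓝 z, g (hInv y) = y := by
    filter_upwards [isOpen_image_g.mem_nhds hz]
    rintro _ ⟨w, hw, rfl⟩
    rw [hInv_g (S_subset_C hw)]
  have hc : ContinuousAt hInv z :=
    (continuousOn_hInv.mono (image_mono S_subset_C)).continuousAt (isOpen_image_g.mem_nhds hz)
  have hmem : hInv z ∈ C := by
    obtain ⟨w, hw, rfl⟩ := hz
    rw [hInv_g (S_subset_C hw)]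
    exact S_subset_C hw
  have h1 := HasDerivAt.of_local_left_inverse hc (hasStrictDerivAt_g _).hasDerivAt
    (one_add_cosh_ne_zero hmem) hev
  rw [dF, div_eq_mul_inv]
  exact (Complex.hasDerivAt_cosh (hInv z)).comp z h1

/-- The differential of the real part of a holomorphic function `F` is `v ↦ Re (F' v)`. -/
lemma hasFDerivAt_re {F : ℂ → ℂ} {c z : ℂ} (h : HasDerivAt F c z) :
    HasFDerivAt (fun z => (F z).re) (reMul c) z :=
  Complex.reCLM.hasFDerivAt.comp z h.complexToReal_fderiv

/-- The real part of a holomorphic function on an open set is harmonic. -/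
lemma harmonicOnC_re {F F' : ℂ → ℂ} {U : Set ℂ} (hU : IsOpen U)
    (hF : ∀ z ∈ U, HasDerivAt F (F' z) z) : HarmonicOnC (fun z => (F z).re) U := by
  have hd : DifferentiableOn ℂ F U := fun z hz =>
    (hF z hz).differentiableAt.differentiableWithinAt
  have hd' : DifferentiableOn ℂ F' U :=
    (hd.deriv hU).congr fun z hz => (hF z hz).deriv.symm
  refine ⟨fun z hz => ?_, fun z hz => ?_⟩
  · have h1 : ContDiffAt ℂ 2 F z := (hd.contDiffOn hU).contDiffAt (hU.mem_nhds hz)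
    exact Complex.reCLM.contDiff.contDiffAt.comp z (h1.restrict_scalars ℝ)
  · have hD := (hd'.differentiableAt (hU.mem_nhds hz)).hasDerivAt
    have key : ∀ v : ℂ, fderiv ℝ (fun w => fderiv ℝ (fun z => (F z).re) w v) z v =
        (deriv F' z * v * v).re := by
      intro v
      have hev : (fun w => fderiv ℝ (fun z => (F z).re) w v) =ᶠ[𝓝 z]
          fun w => (F' w * v).re := by
        filter_upwards [hU.mem_nhds hz] with w hw
        rw [(hasFDerivAt_re (hF w hw)).fderiv, reMul_apply]
      rw [hev.fderiv_eq, (hasFDerivAt_re (hD.mul_const v)).fderiv, reMul_apply]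
    simp only [lapC, key, mul_assoc, Complex.I_mul_I]
    simp

lemma isRoofFunctionC_u : IsRoofFunctionC (g '' S) (fun z => (Complex.cosh (hInv z)).re) := by
  refine ⟨?_, harmonicOnC_re isOpen_image_g fun z hz => hasDerivAt_F hz, ?_, ?_,
    fun z => reMul (dF z), ?_, ?_, ?_⟩
  · rw [closure_image_g]
    exact (Complex.continuous_re.comp Complex.continuous_cosh).comp_continuousOn continuousOn_hInv
  · rintro _ ⟨w, hw, rfl⟩
    simp only [hInv_g (S_subset_C hw)]
    exact cosh_re_pos hw
  · rw [frontier_image_g]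
    rintro _ ⟨w, hw, rfl⟩
    simp only [hInv_g (w := w) (le_of_eq hw)]
    rw [cosh_re, cos_im_eq_zero hw, mul_zero]
  · rw [closure_image_g]
    refine continuous_reMul.comp_continuousOn (ContinuousOn.div ?_ ?_ ?_)
    · exact Complex.continuous_sinh.comp_continuousOn continuousOn_hInv
    · exact continuousOn_const.add (Complex.continuous_cosh.comp_continuousOn continuousOn_hInv)
    · rintro _ ⟨w, hw, rfl⟩
      rw [hInv_g hw]
      exact one_add_cosh_ne_zero hw
  · intro z hz
    exact (hasFDerivAt_re (hasDerivAt_F hz)).fderiv.symm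
  · rw [frontier_image_g]
    rintro _ ⟨w, hw, rfl⟩
    apply norm_reMul
    rw [dF, hInv_g (w := w) (le_of_eq hw)]
    exact norm_sinh_div hw

end HHP

/-- The Hauswirth–Hélein–Pacard domain `Ω = g(Σ)`, `g(w) = w + sinh w`,
`Σ = {|Im w| < π/2}`, is an exceptional domain: it is open and connected, its boundary is
`g({|Im w| = π/2})`, and the function `u` with `u(g(w)) = Re (cosh w)` is a classical
roof function for it. -/
theorem HHP_domain_is_exceptional :
    IsOpen ((fun w : ℂ => w + Complex.sinh w) '' {w : ℂ | |w.im| < Real.pi / 2}) ∧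
    IsConnected ((fun w : ℂ => w + Complex.sinh w) '' {w : ℂ | |w.im| < Real.pi / 2}) ∧
    frontier ((fun w : ℂ => w + Complex.sinh w) '' {w : ℂ | |w.im| < Real.pi / 2}) =
      (fun w : ℂ => w + Complex.sinh w) '' {w : ℂ | |w.im| = Real.pi / 2} ∧
    ∃ u : ℂ → ℝ,
      (∀ w : ℂ, |w.im| < Real.pi / 2 → u (w + Complex.sinh w) = (Complex.cosh w).re) ∧
      IsRoofFunctionC
        ((fun w : ℂ => w + Complex.sinh w) '' {w : ℂ | |w.im| < Real.pi / 2}) u := by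
  refine ⟨HHP.isOpen_image_g, ?_, HHP.frontier_image_g,
    fun z => (Complex.cosh (HHP.hInv z)).re, ?_, HHP.isRoofFunctionC_u⟩
  · have hne : HHP.S.Nonempty := ⟨0, by simp [HHP.S, Real.pi_pos]⟩
    exact (HHP.convex_S.isConnected hne).image _ HHP.continuous_g.continuousOn
  · intro w hw
    exact congrArg (fun w => (Complex.cosh w).re) (HHP.hInv_g (HHP.S_subset_C hw))
end

section
/- Let Σ = {w ∈ ℂ : |Im w| < π/2}, let g(w) = w + sinh(w), let Ω = g(Σ), and let f : Ω → ℂ be the holomorphic function determined by f(g(w)) = cosh(w) for w ∈ Σ. Then f satisfies the differential equation f′(z)²·(f(z) + 1) = f(z) − 1 for every z ∈ Ω. -/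
/-!
On the strip, `Re (cosh (x + iy)) = cosh x * cos y > 0`, so `g w = w + sinh w` has the nonvanishing
derivative `1 + cosh w`. By the inverse function theorem `g` maps neighbourhoods onto
neighbourhoods, hence `f` is complex differentiable at each point of the image (and `deriv f` is its
true derivative there). Differentiating `f (g w) = cosh w` gives `f' (1 + cosh w) = sinh w`;
squaring, using `sinh² = (cosh - 1) (cosh + 1)` and cancelling `1 + cosh w` yields the equation.
-/

open Set

lemma one_add_cosh_ne_zero_of_mem_strip {w : ℂ} (hw : |w.im| < Real.pi / 2) :
    1 + Complex.cosh w ≠ 0 := by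
  intro h
  have hre : (Complex.cosh w).re = Real.cosh w.re * Real.cos w.im := by
    conv_lhs => rw [← Complex.re_add_im w, Complex.cosh_add, Complex.cosh_mul_I,
      Complex.sinh_mul_I]
    simp [Complex.cos_ofReal_re]
  have hpos : 0 < (Complex.cosh w).re := by
    rw [hre]
    have hlt := abs_lt.mp hw
    exact mul_pos (Real.cosh_pos _) (Real.cos_pos_of_mem_Ioo ⟨by linarith [hlt.1], hlt.2⟩)
  have h0 := congrArg Complex.re h
  simp only [Complex.add_re, Complex.one_re, Complex.zero_re] at h0
  linarith

/-- The analytic completion `f` of the roof function of the Hauswirth–Hélein–Pacard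
domain, determined by `f(w + sinh w) = cosh w` on the strip `|Im w| < π/2`, satisfies the
differential equation `f′(z)²(f(z) + 1) = f(z) − 1` on `Ω = g(Σ)`. -/
theorem HHP_analytic_completion_ODE
    (f : ℂ → ℂ)
    (hf : DifferentiableOn ℂ f
      ((fun w : ℂ => w + Complex.sinh w) '' {w : ℂ | |w.im| < Real.pi / 2}))
    (hfg : ∀ w : ℂ, |w.im| < Real.pi / 2 → f (w + Complex.sinh w) = Complex.cosh w) :
    ∀ z ∈ (fun w : ℂ => w + Complex.sinh w) '' {w : ℂ | |w.im| < Real.pi / 2},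
      (deriv f z) ^ 2 * (f z + 1) = f z - 1 := by
  rintro z ⟨w, hw, rfl⟩
  have hne := one_add_cosh_ne_zero_of_mem_strip hw
  have hg : HasStrictDerivAt (fun w : ℂ => w + Complex.sinh w) (1 + Complex.cosh w) w :=
    (hasStrictDerivAt_id w).add (Complex.hasStrictDerivAt_sinh w)
  have hS : {w : ℂ | |w.im| < Real.pi / 2} ∈ nhds w :=
    (isOpen_lt (Complex.continuous_im.abs) continuous_const).mem_nhds hw
  have hΩ : (fun w : ℂ => w + Complex.sinh w) '' {w : ℂ | |w.im| < Real.pi / 2} ∈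
      nhds (w + Complex.sinh w) := by
    rw [← hg.map_nhds_eq hne]
    exact Filter.image_mem_map hS
  have hfd : HasDerivAt f (deriv f (w + Complex.sinh w)) (w + Complex.sinh w) :=
    (hf.differentiableAt hΩ).hasDerivAt
  have hcomp : HasDerivAt (fun w : ℂ => f (w + Complex.sinh w))
      (deriv f (w + Complex.sinh w) * (1 + Complex.cosh w)) w :=
    HasDerivAt.comp w hfd hg.hasDerivAt
  have hcosh : HasDerivAt (fun w : ℂ => f (w + Complex.sinh w)) (Complex.sinh w) w :=
    (Complex.hasDerivAt_cosh w).congr_of_eventuallyEq (Filter.mem_of_superset hS hfg)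
  have key := hcomp.unique hcosh
  have hsq := Complex.cosh_sq w
  simp only [hfg w hw]
  apply mul_right_cancel₀ hne
  linear_combination
    (deriv f (w + Complex.sinh w) * (1 + Complex.cosh w) + Complex.sinh w) * key - hsq
end
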